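/- arXiv:0910.1411 — 7 statements merged into one kernel-verified Lean document; each statement's English description precedes it below -/
import Mathlib

section
/- Let Ω consist of nonzero integers a_1,…,a_r and integers n_1,…,n_r with n_1+⋯+n_r = 0, and let λ_Ω(T) = ∏_{j=1}^{r} (T^{-a_j} − T^{a_j})^{n_j}. Let S be the set consisting of 2 together with all primes dividing at least one a_j. Then the map φ_Ω : W_S → ℚ̄^× defined by φ_Ω(η) = λ_Ω(η) for η ∈ W_S with η ≠ 1, and φ_Ω(1) = ∏_{j=1}^{r} a_j^{n_j}, is well defined (in particular λ_Ω(η) ≠ 0 for all η ∈ W_S, η ≠ 1) and is an Euler system for S. -/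
open scoped BigOperators

noncomputable section

abbrev Qbar : Type := AlgebraicClosure ℚ

/-- `W_S`: the roots of unity in `ℚ̄` whose order is coprime to every prime in `S`. -/
def WS (S : Finset ℕ) : Set Qbar :=
  {ζ : Qbar | ∃ n : ℕ, 0 < n ∧ (∀ q ∈ S, Nat.Coprime n q) ∧ ζ ^ n = 1}

/-- Congruence of two algebraic numbers modulo a prime ideal `𝔭` of the ring of all
algebraic integers: `x ≡ y mod 𝔭` in the usual (localized) sense.  This encodes
congruence modulo the prime `𝔭 ∩ 𝒪_K` of any number field `K` containing `x` and `y`. -/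
def congMod (𝔭 : Ideal (integralClosure ℤ Qbar)) (x y : Qbar) : Prop :=
  ∃ c : integralClosure ℤ Qbar, c ∉ 𝔭 ∧ ∃ u : integralClosure ℤ Qbar, u ∈ 𝔭 ∧
    (x - y) * (c : Qbar) = (u : Qbar)

/-- An Euler system for a finite set `S` of rational primes containing `2`:
a map `φ : W_S → ℚ̄ˣ` satisfying the axioms (E1), (E2), (E3). -/
structure IsEulerSystem (S : Finset ℕ) (φ : Qbar → Qbar) : Prop where
  two_mem : 2 ∈ S
  prime_mem : ∀ q ∈ S, Nat.Prime q
  ne_zero : ∀ η ∈ WS S, φ η ≠ 0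
  /-- (E1a): Galois equivariance. -/
  galois_equivariant : ∀ σ : Qbar ≃ₐ[ℚ] Qbar, ∀ η ∈ WS S, φ (σ η) = σ (φ η)
  /-- (E1b): `φ(η⁻¹) = φ(η)`. -/
  map_inv : ∀ η ∈ WS S, φ η⁻¹ = φ η
  /-- (E2): the norm relation `∏_{ζ ∈ μ_p} φ(ζη) = φ(η^p)` for primes `p ∉ S`. -/
  norm_relation : ∀ p : ℕ, p.Prime → p ∉ S → ∀ η ∈ WS S,
    (∏ᶠ (ζ : Qbar) (_ : ζ ^ p = 1), φ (ζ * η)) = φ (η ^ p)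
  /-- (E3): the congruence `φ(ζη) ≡ φ(η) mod 𝔭` for all primes `𝔭` above `p ∉ S`,
  whenever `η` has order prime to `p` and `ζ ∈ μ_p`. -/
  congruence : ∀ p : ℕ, p.Prime → p ∉ S → ∀ η ∈ WS S,
    (∃ n : ℕ, 0 < n ∧ ¬ p ∣ n ∧ η ^ n = 1) →
    ∀ ζ : Qbar, ζ ^ p = 1 →
    ∀ 𝔭 : Ideal (integralClosure ℤ Qbar), 𝔭.IsMaximal → (p : integralClosure ℤ Qbar) ∈ 𝔭 →
      congMod 𝔭 (φ (ζ * η)) (φ η)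

open Polynomial Classical in
theorem aux_prod_one_sub {p : ℕ} (hp : p.Prime) :
    ∏ ζ ∈ (nthRootsFinset p (1:Qbar)).erase 1, (1 - ζ) = (p : Qbar) := by
  classical
  have : Fact p.Prime := ⟨hp⟩
  have : NeZero p := ⟨hp.ne_zero⟩
  have h0 : ((p:ℕ):Qbar) ≠ 0 := by exact_mod_cast hp.ne_zero
  have : NeZero ((p:ℕ):Qbar) := ⟨h0⟩
  obtain ⟨ω, hω⟩ := IsAlgClosed.exists_root (cyclotomic p Qbar) (degree_cyclotomic_pos p Qbar hp.pos).ne'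
  have hω' : IsPrimitiveRoot ω p := (isRoot_cyclotomic_iff).1 hω
  have h1 := eval_one_cyclotomic_prime (R := Qbar) (p := p)
  rw [cyclotomic_eq_prod_X_sub_primitiveRoots hω', eval_prod] at h1
  rw [← h1]
  simp only [eval_sub, eval_X, eval_C]
  apply Finset.prod_congr _ (fun _ _ => rfl)
  ext z
  rw [Finset.mem_erase, mem_nthRootsFinset hp.pos, mem_primitiveRoots hp.pos]
  constructor
  · rintro ⟨a, b⟩
    have := orderOf_eq_prime b a
    rw [← this]; exact IsPrimitiveRoot.orderOf z
  · intro h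
    exact ⟨h.ne_one hp.one_lt, h.pow_eq_one⟩

theorem aux_coprime {x : Qbar} {m n : ℤ} (h : IsCoprime m n) (hx : x ^ m = 1) (hy : x ^ n = 1)
    (h0 : x ≠ 0) : x = 1 := by
  obtain ⟨u, v, huv⟩ := h
  calc x = x ^ (u * m + v * n) := by rw [huv, zpow_one]
    _ = 1 := by rw [zpow_add₀ h0, mul_comm u, mul_comm v, zpow_mul, zpow_mul, hx, hy]; simp

theorem aux_ne {p : ℕ} (hp : 0 < p) {x : Qbar} (h : x ^ p = 1) : x ≠ 0 := by
  rintro rfl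
  rw [zero_pow hp.ne'] at h
  exact zero_ne_one h

open Polynomial in
/-- raising to a power prime to `p` permutes the `p`-th roots of unity -/
theorem aux_bij {p : ℕ} (hp : p.Prime) {m : ℤ} (hm : IsCoprime m p) (f : Qbar → Qbar) :
    ∏ ζ ∈ nthRootsFinset p (1:Qbar), f (ζ ^ m) = ∏ ζ ∈ nthRootsFinset p (1:Qbar), f ζ := by
  have hmaps : Set.MapsTo (fun z : Qbar => z ^ m) (nthRootsFinset p (1:Qbar)) (nthRootsFinset p (1:Qbar)) := by
    intro z hz
    simp only [Finset.mem_coe, mem_nthRootsFinset hp.pos] at hz ⊢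
    rw [← zpow_natCast, zpow_comm, zpow_natCast, hz, one_zpow]
  have hinj : Set.InjOn (fun z : Qbar => z ^ m) (nthRootsFinset p (1:Qbar)) := by
    intro z hz w hw hzw
    simp only [Finset.mem_coe, mem_nthRootsFinset hp.pos] at hz hw hzw
    have hz0 := aux_ne hp.pos hz
    have hw0 := aux_ne hp.pos hw
    have : z / w = 1 := by
      apply aux_coprime hm
      · rw [div_zpow, hzw, div_self (zpow_ne_zero _ hw0)]
      · rw [zpow_natCast, div_pow, hz, hw, div_one]
      · exact div_ne_zero hz0 hw0
    rwa [div_eq_one_iff_eq hw0] at this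
  exact Finset.prod_nbij (fun z => z ^ m) hmaps hinj
    (Finset.surjOn_of_injOn_of_card_le _ hmaps hinj le_rfl) (fun _ _ => rfl)

open Polynomial in
theorem aux_pow_sub {p : ℕ} (hp : p.Prime) (x y : Qbar) :
    x ^ p - y ^ p = ∏ ζ ∈ nthRootsFinset p (1:Qbar), (x - ζ * y) := by
  have : NeZero ((p:ℕ):Qbar) := ⟨by exact_mod_cast hp.ne_zero⟩
  obtain ⟨ω, hω⟩ := IsAlgClosed.exists_root (cyclotomic p Qbar) (degree_cyclotomic_pos p Qbar hp.pos).ne'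
  have hω' : IsPrimitiveRoot ω p := (isRoot_cyclotomic_iff).1 hω
  exact hω'.pow_sub_pow_eq_prod_sub_mul x y hp.pos

open Polynomial in
theorem aux_prod_roots {p : ℕ} (hp : p.Prime) (h2 : p ≠ 2) :
    ∏ ζ ∈ nthRootsFinset p (1:Qbar), ζ = 1 := by
  have h3 := aux_pow_sub hp 0 1
  have hodd : Odd p := hp.odd_of_ne_two h2
  have : NeZero ((p:ℕ):Qbar) := ⟨by exact_mod_cast hp.ne_zero⟩
  obtain ⟨ω, hω⟩ := IsAlgClosed.exists_root (cyclotomic p Qbar) (degree_cyclotomic_pos p Qbar hp.pos).ne'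
  have hω' : IsPrimitiveRoot ω p := (isRoot_cyclotomic_iff).1 hω
  simp only [mul_one, zero_sub, one_pow, zero_pow hp.ne_zero] at h3
  have h4 : ∏ ζ ∈ nthRootsFinset p (1:Qbar), -ζ = (-1) ^ p * ∏ ζ ∈ nthRootsFinset p (1:Qbar), ζ := by
    have h5 : ((-1 : Qbar)) ^ p = ∏ _ζ ∈ nthRootsFinset p (1:Qbar), (-1 : Qbar) := by
      rw [Finset.prod_const, hω'.card_nthRootsFinset]
    rw [h5, ← Finset.prod_mul_distrib]
    simp
  rw [h4, hodd.neg_one_pow] at h3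
  linear_combination h3

theorem aux_factor {z x : Qbar} (hz : z ≠ 0) (a : ℤ) :
    (z * x) ^ (-a) - (z * x) ^ a = z ^ (-a) * (x ^ (-a) - z ^ (2 * a) * x ^ a) := by
  rw [mul_zpow, mul_zpow, mul_sub, ← mul_assoc, ← zpow_add₀ hz]
  congr 3; ring

open Polynomial in
theorem aux_norm1 {p : ℕ} (hp : p.Prime) (h2 : p ≠ 2) {a : ℤ} (ha : IsCoprime (2 * a) p) {x : Qbar}
    (hx : x ≠ 0) :
    ∏ ζ ∈ nthRootsFinset p (1:Qbar), ((ζ * x) ^ (-a) - (ζ * x) ^ a)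
      = (x ^ p) ^ (-a) - (x ^ p) ^ a := by
  have h1 : ∀ ζ ∈ nthRootsFinset p (1:Qbar), ((ζ * x) ^ (-a) - (ζ * x) ^ a)
      = ζ ^ (-a) * (x ^ (-a) - ζ ^ (2 * a) * x ^ a) := by
    intro ζ hζ
    rw [mem_nthRootsFinset hp.pos] at hζ
    exact aux_factor (aux_ne hp.pos hζ) a
  rw [Finset.prod_congr rfl h1, Finset.prod_mul_distrib, Finset.prod_zpow, aux_prod_roots hp h2,
    one_zpow, one_mul, aux_bij hp ha (fun z => x ^ (-a) - z * x ^ a), ← aux_pow_sub hp]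
  simp only [← zpow_natCast]
  rw [zpow_comm x (-a), zpow_comm x a]

open Polynomial Classical in
theorem aux_norm2 {p : ℕ} (hp : p.Prime) (h2 : p ≠ 2) {a : ℤ} (ha : IsCoprime (2 * a) p) :
    ∏ ζ ∈ (nthRootsFinset p (1:Qbar)).erase 1, (ζ ^ (-a) - ζ ^ a) = (p : Qbar) := by
  classical
  have h1 : ∀ ζ ∈ (nthRootsFinset p (1:Qbar)).erase 1, (ζ ^ (-a) - ζ ^ a)
      = ζ ^ (-a) * (1 - ζ ^ (2 * a)) := by
    intro ζ hζ
    rw [Finset.mem_erase, mem_nthRootsFinset hp.pos] at hζ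
    simpa using aux_factor (x := 1) (aux_ne hp.pos hζ.2) a
  have m1 : (1:Qbar) ∈ nthRootsFinset p (1:Qbar) := by rw [mem_nthRootsFinset hp.pos, one_pow]
  rw [Finset.prod_congr rfl h1, Finset.prod_mul_distrib, Finset.prod_zpow]
  have e1 : ∏ ζ ∈ (nthRootsFinset p (1:Qbar)).erase 1, ζ = 1 := by
    have h3 := aux_prod_roots hp h2
    rwa [← Finset.mul_prod_erase _ _ m1, one_mul] at h3
  rw [e1, one_zpow, one_mul, ← aux_prod_one_sub hp]
  have key := aux_bij hp ha (fun z => if z = 1 then 1 else 1 - z)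
  rw [← Finset.mul_prod_erase _ _ m1, ← Finset.mul_prod_erase _ _ m1] at key
  simp only [one_zpow, if_true, one_mul] at key
  rw [Finset.prod_congr rfl, key, Finset.prod_congr rfl]
  · intro z hz
    rw [if_neg (Finset.ne_of_mem_erase hz)]
  · intro z hz
    rw [if_neg]
    intro h
    rw [Finset.mem_erase, mem_nthRootsFinset hp.pos] at hz
    exact hz.1 (aux_coprime ha h (by rw [zpow_natCast, hz.2]) (aux_ne hp.pos hz.2))

abbrev ZB := integralClosure ℤ Qbar

/-- Multiplicative congruence of units at the prime. -/
def UC (P : Ideal ZB) (x y : Qbar) : Prop :=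
  ∃ s t d : ZB, s ∉ P ∧ t ∉ P ∧ d ∉ P ∧ s - t ∈ P ∧ x * d = s ∧ y * d = t

theorem UC.congMod {P : Ideal ZB} {x y : Qbar} (h : UC P x y) : congMod P x y := by
  obtain ⟨s, t, d, hs, ht, hd, hst, h1, h2⟩ := h
  refine ⟨d, hd, s - t, hst, ?_⟩
  push_cast
  rw [sub_mul, h1, h2]

theorem UC.of_mem {P : Ideal ZB} [P.IsPrime] {s t : ZB} (ht : t ∉ P) (h : s - t ∈ P) :
    UC P s t := by
  refine ⟨s, t, 1, ?_, ht, fun h1 => ht (by simpa using P.mul_mem_left t h1), h, by simp, by simp⟩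
  intro hs
  exact ht (by simpa using P.sub_mem hs h)

theorem UC.one {P : Ideal ZB} [hP : P.IsPrime] : UC P 1 1 := by
  have h1 : (1 : ZB) ∉ P := fun h => hP.ne_top ((Ideal.eq_top_iff_one _).2 h)
  have := UC.of_mem (s := 1) h1 (by simp)
  simpa using this

theorem UC.mul {P : Ideal ZB} [hP : P.IsPrime] {x y x' y' : Qbar} (h : UC P x y) (h' : UC P x' y') :
    UC P (x * x') (y * y') := by
  obtain ⟨s, t, d, hs, ht, hd, hst, h1, h2⟩ := h
  obtain ⟨s', t', d', hs', ht', hd', hst', h1', h2'⟩ := h'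
  refine ⟨s * s', t * t', d * d', hP.mul_notMem hs hs', hP.mul_notMem ht ht',
    hP.mul_notMem hd hd', ?_, ?_, ?_⟩
  · have := P.add_mem (P.mul_mem_left s' hst) (P.mul_mem_left t hst')
    convert this using 1; ring
  · push_cast; rw [← h1, ← h1']; ring
  · push_cast; rw [← h2, ← h2']; ring

theorem UC.inv {P : Ideal ZB} [hP : P.IsPrime] {x y : Qbar} (h : UC P x y) :
    UC P x⁻¹ y⁻¹ := by
  obtain ⟨s, t, d, hs, ht, hd, hst, h1, h2⟩ := h
  have hs0 : (s : Qbar) ≠ 0 := by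
    intro h; apply hs; have : s = 0 := Subtype.ext h
    rw [this]; exact P.zero_mem
  have ht0 : (t : Qbar) ≠ 0 := by
    intro h; apply ht; have : t = 0 := Subtype.ext h
    rw [this]; exact P.zero_mem
  have hx : x ≠ 0 := by rintro rfl; exact hs0 (by rw [← h1, zero_mul])
  have hy : y ≠ 0 := by rintro rfl; exact ht0 (by rw [← h2, zero_mul])
  refine ⟨d * t, d * s, s * t, hP.mul_notMem hd ht, hP.mul_notMem hd hs,
    hP.mul_notMem hs ht, ?_, ?_, ?_⟩
  · have := P.mul_mem_left (-d) hst
    convert this using 1; ring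
  · push_cast; rw [← h1]; field_simp
  · push_cast; rw [← h2]; field_simp

theorem UC.pow {P : Ideal ZB} [hP : P.IsPrime] {x y : Qbar} (h : UC P x y) (n : ℕ) :
    UC P (x ^ n) (y ^ n) := by
  induction n with
  | zero => simpa using UC.one
  | succ k ih => rw [pow_succ, pow_succ]; exact ih.mul h

theorem UC.zpow {P : Ideal ZB} [hP : P.IsPrime] {x y : Qbar} (h : UC P x y) (n : ℤ) :
    UC P (x ^ n) (y ^ n) := by
  cases n with
  | ofNat k => simpa using h.pow k
  | negSucc k => rw [zpow_negSucc, zpow_negSucc]; exact (h.pow _).inv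

theorem UC.prod {P : Ideal ZB} [hP : P.IsPrime] {r : ℕ} {x y : Fin r → Qbar}
    (h : ∀ j, UC P (x j) (y j)) : UC P (∏ j, x j) (∏ j, y j) := by
  classical
  have : ∀ s : Finset (Fin r), UC P (∏ j ∈ s, x j) (∏ j ∈ s, y j) := by
    intro s
    induction s using Finset.induction_on with
    | empty => simpa using UC.one
    | insert i s hi ih => rw [Finset.prod_insert hi, Finset.prod_insert hi]; exact (h i).mul ih
  exact this _

theorem aux_lift {x : Qbar} {n : ℕ} (hn : 0 < n) (hx : x ^ n = 1) :
    ∃ u : ZBˣ, ((u : ZB) : Qbar) = x ∧ u ^ n = 1 := by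
  have hi : IsIntegral ℤ x := IsIntegral.of_pow hn (by rw [hx]; exact isIntegral_one)
  have h1 : (⟨x, hi⟩ : ZB) ^ n = 1 := Subtype.ext (by simpa using hx)
  refine ⟨Units.ofPowEqOne _ n h1 hn.ne', rfl, ?_⟩
  exact Units.pow_ofPowEqOne h1 hn.ne'

theorem aux_coe_zpow (u : ZBˣ) (a : ℤ) :
    (((u ^ a : ZBˣ) : ZB) : Qbar) = ((u : ZB) : Qbar) ^ a := by
  have := congrArg Units.val (map_zpow (Units.map (algebraMap ZB Qbar).toMonoidHom) u a)
  rw [Units.val_zpow_eq_zpow_val] at this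
  exact this

theorem aux_notMem {P : Ideal ZB} [hP : P.IsPrime] {p : ℕ} (hp : (p : ZB) ∈ P) {a : ℤ}
    (h : IsCoprime a p) : (a : ZB) ∉ P := by
  intro ha
  obtain ⟨u, v, huv⟩ := h
  apply hP.ne_top
  rw [Ideal.eq_top_iff_one]
  have := P.add_mem (P.mul_mem_left (u : ZB) ha) (P.mul_mem_left (v : ZB) hp)
  have e : (u : ZB) * a + v * p = 1 := by exact_mod_cast congrArg (Int.cast : ℤ → ZB) huv
  rwa [e] at this

theorem aux_one_sub {P : Ideal ZB} [hP : P.IsPrime] {x : ZB} {n : ℕ} (hx : x ^ n = 1) (h1 : x ≠ 1)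
    (hn : (n : ZB) ∉ P) : 1 - x ∉ P := by
  intro h
  have hg : ∑ i ∈ Finset.range n, x ^ i = 0 := by
    have := geom_sum_mul x n
    rw [hx, sub_self] at this
    exact (mul_eq_zero.1 this).resolve_right (sub_ne_zero.2 h1)
  have hq : Ideal.Quotient.mk P x = 1 := by
    have := (Ideal.Quotient.eq (I := P)).2 h
    rw [← this, map_one]
  have := congrArg (Ideal.Quotient.mk P) hg
  rw [map_sum] at this
  simp only [map_pow, hq, one_pow, Finset.sum_const, Finset.card_range, map_zero, nsmul_eq_mul,
    mul_one] at this
  apply hn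
  rw [← Ideal.Quotient.eq_zero_iff_mem, map_natCast, this]

theorem aux_zeta {P : Ideal ZB} [hP : P.IsPrime] {p : ℕ} (hpp : p.Prime) (hp : (p : ZB) ∈ P)
    {z : ZB} (hz : z ^ p = 1) : Ideal.Quotient.mk P z = 1 := by
  obtain ⟨r, hr⟩ := exists_add_pow_prime_eq hpp (z - 1) 1
  rw [sub_add_cancel, hz, one_pow] at hr
  have h : (z - 1) ^ p ∈ P := by
    have : (z - 1) ^ p = -(1 * (z - 1) * r) * p := by
      linear_combination -hr
    rw [this]; exact P.mul_mem_left _ hp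
  have := hP.mem_of_pow_mem _ h
  rw [← map_one (Ideal.Quotient.mk P)]
  exact Ideal.Quotient.eq.2 this

theorem aux_quot {P : Ideal ZB} {z : ZBˣ} (h : Ideal.Quotient.mk P (z : ZB) = 1) (a : ℤ) :
    Ideal.Quotient.mk P ((z ^ a : ZBˣ) : ZB) = 1 := by
  have h1 : Units.map (Ideal.Quotient.mk P).toMonoidHom z = 1 := Units.ext h
  have := map_zpow (Units.map (Ideal.Quotient.mk P).toMonoidHom) z a
  rw [h1, one_zpow] at this
  exact congrArg Units.val this

theorem aux_cong1 {P : Ideal ZB} [hP : P.IsPrime] {p n : ℕ} (hpp : p.Prime) (hp : (p : ZB) ∈ P)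
    {z e : Qbar} (hz : z ^ p = 1) (hn : 0 < n) (hpn : ¬ p ∣ n) (he : e ^ n = 1) {a : ℤ}
    (hne : e ^ (-a) - e ^ a ≠ 0) :
    UC P ((z * e) ^ (-a) - (z * e) ^ a) (e ^ (-a) - e ^ a) := by
  obtain ⟨u, rfl, hu⟩ := aux_lift hpp.pos hz
  obtain ⟨w, rfl, hw⟩ := aux_lift hn he
  have hq : Ideal.Quotient.mk P (u : ZB) = 1 :=
    aux_zeta hpp hp (by rw [← Units.val_pow_eq_pow_val, hu, Units.val_one])
  have key : ∀ b : ℤ, Ideal.Quotient.mk P (((u * w) ^ b : ZBˣ) : ZB) =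
      Ideal.Quotient.mk P ((w ^ b : ZBˣ) : ZB) := by
    intro b
    rw [mul_zpow, Units.val_mul, map_mul, aux_quot hq, one_mul]
  have h := UC.of_mem (P := P) (s := (((u * w) ^ (-a) : ZBˣ) : ZB) - (((u * w) ^ a : ZBˣ) : ZB))
    (t := ((w ^ (-a) : ZBˣ) : ZB) - ((w ^ a : ZBˣ) : ZB)) ?_ ?_
  · push_cast at h
    simpa only [aux_coe_zpow, Units.val_mul, MulMemClass.coe_mul] using h
  · have e1 : ((w ^ (-a) : ZBˣ) : ZB) - ((w ^ a : ZBˣ) : ZB) =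
        ((w ^ (-a) : ZBˣ) : ZB) * (1 - ((w ^ (2 * a) : ZBˣ) : ZB)) := by
      rw [mul_sub, mul_one, ← Units.val_mul, ← zpow_add]
      congr 4; ring
    rw [e1]
    refine hP.mul_notMem ?_ (aux_one_sub (n := n) ?_ ?_ ?_)
    · intro hm; exact hP.ne_top (Ideal.eq_top_of_isUnit_mem _ hm (Units.isUnit _))
    · rw [← Units.val_pow_eq_pow_val, ← zpow_natCast, zpow_comm, zpow_natCast, hw, one_zpow,
        Units.val_one]
    · intro h1
      rw [h1, sub_self, mul_zero] at e1
      apply hne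
      rw [← aux_coe_zpow, ← aux_coe_zpow, sub_eq_zero]
      exact congrArg Subtype.val (sub_eq_zero.1 e1)
    · have := aux_notMem hp (a := n) (Nat.isCoprime_iff_coprime.2 ((hpp.coprime_iff_not_dvd.2 hpn).symm))
      simpa using this
  · rw [← Ideal.Quotient.eq]
    simp only [map_sub, key]

theorem aux_gauss {P : Ideal ZB} {u : ZBˣ} (h : Ideal.Quotient.mk P (u : ZB) = 1) (a : ℤ) :
    ∃ g : ZB, ((u ^ (-a) : ZBˣ) : ZB) - ((u ^ a : ZBˣ) : ZB)
      = g * (((u⁻¹ : ZBˣ) : ZB) - (u : ZB)) ∧ Ideal.Quotient.mk P g = (a : ZB ⧸ P) := by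
  have hinv : Ideal.Quotient.mk P ((u⁻¹ : ZBˣ) : ZB) = 1 := by
    simpa using aux_quot h (-1)
  have hu : (u : ZB) * ((u⁻¹ : ZBˣ) : ZB) = 1 := by simp
  induction a using Int.induction_on with
  | zero => exact ⟨0, by simp, by simp⟩
  | succ i ih =>
    obtain ⟨g, hg, hg'⟩ := ih
    refine ⟨((u⁻¹ : ZBˣ) : ZB) * g + ((u ^ (i : ℤ) : ZBˣ) : ZB), ?_, ?_⟩
    · have e1 : ((u ^ (-((i : ℤ) + 1)) : ZBˣ) : ZB) = ((u ^ (-(i : ℤ)) : ZBˣ) : ZB) * ((u⁻¹ : ZBˣ) : ZB) := by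
        rw [← Units.val_mul]; congr 1; rw [neg_add, zpow_add, zpow_neg_one]
      have e2 : ((u ^ ((i : ℤ) + 1) : ZBˣ) : ZB) = ((u ^ (i : ℤ) : ZBˣ) : ZB) * (u : ZB) := by
        rw [← Units.val_mul]; congr 1; rw [zpow_add_one]
      rw [e1, e2]
      linear_combination ((u⁻¹ : ZBˣ) : ZB) * hg
    · rw [map_add, map_mul, hinv, hg', aux_quot h]; push_cast; ring
  | pred i ih =>
    obtain ⟨g, hg, hg'⟩ := ih
    refine ⟨(u : ZB) * g - ((u ^ (-(i : ℤ)) : ZBˣ) : ZB), ?_, ?_⟩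
    · have e1 : ((u ^ (-(-(i : ℤ) - 1)) : ZBˣ) : ZB) = ((u ^ (-(-(i : ℤ))) : ZBˣ) : ZB) * (u : ZB) := by
        rw [← Units.val_mul]; congr 1; rw [← zpow_add_one]; congr 1; ring
      have e2 : ((u ^ (-(i : ℤ) - 1) : ZBˣ) : ZB) = ((u ^ (-(i : ℤ)) : ZBˣ) : ZB) * ((u⁻¹ : ZBˣ) : ZB) := by
        rw [← Units.val_mul]; congr 1; rw [zpow_sub_one]
      rw [e1, e2]
      linear_combination (u : ZB) * hg
    · rw [map_sub, map_mul, h, hg', aux_quot h]; push_cast; ring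

theorem aux_cong2 {P : Ideal ZB} [hP : P.IsPrime] {p : ℕ} (hpp : p.Prime) (hp : (p : ZB) ∈ P)
    {z : Qbar} (hz : z ^ p = 1) {a : ℤ} (ha : IsCoprime a p) (hne : z⁻¹ - z ≠ 0) :
    UC P ((z ^ (-a) - z ^ a) / (z⁻¹ - z)) (a : Qbar) := by
  obtain ⟨u, rfl, hu⟩ := aux_lift hpp.pos hz
  have hq : Ideal.Quotient.mk P (u : ZB) = 1 :=
    aux_zeta hpp hp (by rw [← Units.val_pow_eq_pow_val, hu, Units.val_one])
  obtain ⟨g, hg, hg'⟩ := aux_gauss hq a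
  have h := UC.of_mem (P := P) (s := g) (t := (a : ZB)) (aux_notMem hp ha)
    (by rw [← Ideal.Quotient.eq, hg', map_intCast])
  have e := congrArg (Subtype.val : ZB → Qbar) hg
  have einv : (((u⁻¹ : ZBˣ) : ZB) : Qbar) = ((u : ZB) : Qbar)⁻¹ := by
    have := aux_coe_zpow u (-1)
    simpa using this
  have e' : ((u : ZB) : Qbar) ^ (-a) - ((u : ZB) : Qbar) ^ a =
      (g : Qbar) * (((u : ZB) : Qbar)⁻¹ - ((u : ZB) : Qbar)) := by
    rw [← einv, ← aux_coe_zpow, ← aux_coe_zpow]; exact e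
  rw [e', mul_div_cancel_right₀ _ hne]
  simpa using h

theorem aux_zsum {ι : Type*} (s : Finset ι) (n : ι → ℤ) {c : Qbar} (hc : c ≠ 0) :
    ∏ j ∈ s, c ^ n j = c ^ ∑ j ∈ s, n j := by
  classical
  induction s using Finset.induction_on with
  | empty => simp
  | insert i s hi ih => rw [Finset.prod_insert hi, Finset.sum_insert hi, zpow_add₀ hc, ih]

/-- The map `φ_Ω` built from the data `Ω = (a_j, n_j)_{j=1..r}` with
`∑ n_j = 0` via `λ_Ω(T) = ∏ (T^{-a_j} - T^{a_j})^{n_j}` for `η ≠ 1`, together with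
`φ_Ω(1) = ∏ a_j^{n_j}`, is well defined (the factors `η^{-a_j} - η^{a_j}` are nonzero
for `η ∈ W_S`, `η ≠ 1`) and is an Euler system for the set `S` consisting of `2` and
the primes dividing at least one `a_j`. -/
theorem eulerSystem_of_cyclotomic_data
    (r : ℕ) (a : Fin r → ℤ) (ha : ∀ j, a j ≠ 0)
    (nn : Fin r → ℤ) (hsum : ∑ j, nn j = 0)
    (S : Finset ℕ)
    (hS : S = insert 2 (Finset.univ.biUnion fun j : Fin r => (a j).natAbs.primeFactors))
    (φ : Qbar → Qbar)
    (hφ1 : ∀ η : Qbar, η ≠ 1 → φ η = ∏ j, (η ^ (-(a j)) - η ^ (a j)) ^ (nn j))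
    (hφ2 : φ 1 = ∏ j, (a j : Qbar) ^ (nn j)) :
    (∀ η ∈ WS S, η ≠ 1 → ∀ j, η ^ (-(a j)) - η ^ (a j) ≠ 0) ∧
    IsEulerSystem S φ := by
  classical
  have hcop : ∀ n : ℕ, (∀ q ∈ S, Nat.Coprime n q) → ∀ j, IsCoprime (2 * a j) (n : ℤ) := by
    intro n hn j
    rw [Int.isCoprime_iff_gcd_eq_one, Int.gcd_eq_natAbs, Int.natAbs_natCast, Int.natAbs_mul]
    apply Nat.Coprime.mul_left
    · exact (hn 2 (by rw [hS]; simp)).symm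
    · apply Nat.coprime_of_dvd
      intro q hq hqa hqn
      have hqS : q ∈ S := by
        rw [hS, Finset.mem_insert, Finset.mem_biUnion]
        right
        exact ⟨j, Finset.mem_univ _, Nat.mem_primeFactors.2 ⟨hq, hqa, Int.natAbs_ne_zero.2 (ha j)⟩⟩
      exact hq.one_lt.ne' (Nat.eq_one_of_dvd_coprimes (hn q hqS) hqn dvd_rfl)
  have hprime : ∀ q ∈ S, Nat.Prime q := by
    intro q hq
    rw [hS, Finset.mem_insert, Finset.mem_biUnion] at hq
    rcases hq with rfl | ⟨j, _, hj⟩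
    · exact Nat.prime_two
    · exact Nat.prime_of_mem_primeFactors hj
  have htwo : 2 ∈ S := by rw [hS]; simp
  have hpcop : ∀ p : ℕ, p.Prime → p ∉ S → ∀ j, IsCoprime (2 * a j) (p : ℤ) := by
    intro p hp hpS
    apply hcop
    intro q hq
    rw [Nat.coprime_primes hp (hprime q hq)]
    rintro rfl
    exact hpS hq
  have hfac : ∀ x : Qbar, x ≠ 0 → x ≠ 1 → ∀ n : ℕ, x ^ n = 1 → ∀ b : ℤ, IsCoprime (2 * b) (n : ℤ) →
      x ^ (-b) - x ^ b ≠ 0 := by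
    intro x hx0 hx1 n hn b hb h
    apply hx1
    apply aux_coprime hb _ (by rw [zpow_natCast, hn]) hx0
    rw [sub_eq_zero, zpow_neg] at h
    rw [two_mul, zpow_add₀ hx0]
    nth_rewrite 1 [← h]
    exact inv_mul_cancel₀ (zpow_ne_zero _ hx0)
  have hwd : ∀ η ∈ WS S, η ≠ 1 → ∀ j, η ^ (-(a j)) - η ^ (a j) ≠ 0 := by
    rintro η ⟨n, hn, hc, he⟩ h1 j
    exact hfac η (aux_ne hn he) h1 n he _ (hcop n hc j)
  refine ⟨hwd, htwo, hprime, ?_, ?_, ?_, ?_, ?_⟩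
  · intro η hη
    by_cases h1 : η = 1
    · rw [h1, hφ2]
      exact Finset.prod_ne_zero_iff.2 fun j _ => zpow_ne_zero _ (by exact_mod_cast ha j)
    · rw [hφ1 η h1]
      exact Finset.prod_ne_zero_iff.2 fun j _ => zpow_ne_zero _ (hwd η hη h1 j)
  · intro σ η hη
    by_cases h1 : η = 1
    · rw [h1, map_one, hφ2, map_prod]
      simp only [map_zpow₀, map_intCast]
    · have h2 : σ η ≠ 1 := by
        intro h; apply h1; apply σ.injective; rw [h, map_one]
      rw [hφ1 _ h1, hφ1 _ h2, map_prod]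
      simp only [map_zpow₀, map_sub]
  · intro η hη
    by_cases h1 : η = 1
    · rw [h1, inv_one]
    · have h2 : η⁻¹ ≠ 1 := by
        intro h; apply h1; rwa [inv_eq_one] at h
      rw [hφ1 _ h1, hφ1 _ h2]
      have : ∀ j, ((η⁻¹) ^ (-(a j)) - (η⁻¹) ^ (a j)) ^ (nn j)
          = (-1 : Qbar) ^ (nn j) * (η ^ (-(a j)) - η ^ (a j)) ^ (nn j) := by
        intro j
        rw [← mul_zpow]
        congr 1
        rw [inv_zpow', inv_zpow', neg_neg]; ring
      rw [Finset.prod_congr rfl (fun j _ => this j), Finset.prod_mul_distrib,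
        aux_zsum _ _ (by simp), hsum, zpow_zero, one_mul]
  · intro p hp hpS η hη
    have hp2 : p ≠ 2 := by rintro rfl; exact hpS htwo
    obtain ⟨n, hn, hc, he⟩ := hη
    have hη0 := aux_ne hn he
    have hfin : (∏ᶠ (ζ : Qbar) (_ : ζ ^ p = 1), φ (ζ * η)) =
        ∏ ζ ∈ Polynomial.nthRootsFinset p (1:Qbar), φ (ζ * η) := by
      rw [← finprod_mem_finset_eq_prod]
      simp only [Polynomial.mem_nthRootsFinset hp.pos]
    rw [hfin]
    by_cases h1 : η ^ p = 1
    · have hre : ∏ ζ ∈ Polynomial.nthRootsFinset p (1:Qbar), φ (ζ * η) =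
          ∏ ζ ∈ Polynomial.nthRootsFinset p (1:Qbar), φ ζ := by
        refine Finset.prod_nbij' (fun z => z * η) (fun z => z * η⁻¹) ?_ ?_ ?_ ?_ ?_
        · intro z hz
          rw [Polynomial.mem_nthRootsFinset hp.pos] at hz ⊢
          rw [mul_pow, hz, h1, one_mul]
        · intro z hz
          rw [Polynomial.mem_nthRootsFinset hp.pos] at hz ⊢
          rw [mul_pow, hz, inv_pow, h1, one_mul, inv_one]
        · intro z _; exact mul_inv_cancel_right₀ hη0 z
        · intro z _; exact inv_mul_cancel_right₀ hη0 z
        · intro z _; rfl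
      have m1 : (1:Qbar) ∈ Polynomial.nthRootsFinset p (1:Qbar) := by
        rw [Polynomial.mem_nthRootsFinset hp.pos, one_pow]
      rw [hre, h1, ← Finset.mul_prod_erase _ _ m1]
      have : ∏ ζ ∈ (Polynomial.nthRootsFinset p (1:Qbar)).erase 1, φ ζ = 1 := by
        rw [Finset.prod_congr rfl (fun z hz => hφ1 z (Finset.ne_of_mem_erase hz)),
          Finset.prod_comm]
        have e : ∀ j, ∏ ζ ∈ (Polynomial.nthRootsFinset p (1:Qbar)).erase 1,
            (ζ ^ (-(a j)) - ζ ^ (a j)) ^ (nn j) = (p : Qbar) ^ (nn j) := by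
          intro j
          rw [Finset.prod_zpow]
          congr 1
          convert aux_norm2 hp hp2 (hpcop p hp hpS j)
        rw [Finset.prod_congr rfl (fun j _ => e j),
          aux_zsum _ _ (by exact_mod_cast hp.ne_zero), hsum, zpow_zero]
      rw [this, mul_one]
    · rw [hφ1 _ h1]
      have e0 : ∀ ζ ∈ Polynomial.nthRootsFinset p (1:Qbar), φ (ζ * η) =
          ∏ j, ((ζ * η) ^ (-(a j)) - (ζ * η) ^ (a j)) ^ (nn j) := by
        intro z hz
        rw [Polynomial.mem_nthRootsFinset hp.pos] at hz
        apply hφ1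
        intro h
        apply h1
        have : (z * η) ^ p = 1 := by rw [h, one_pow]
        rwa [mul_pow, hz, one_mul] at this
      rw [Finset.prod_congr rfl e0, Finset.prod_comm]
      refine Finset.prod_congr rfl fun j _ => ?_
      rw [Finset.prod_zpow, aux_norm1 hp hp2 (hpcop p hp hpS j) hη0]
  · intro p hp hpS η hη hord ζ hζ P hP hpP
    have hPp : P.IsPrime := hP.isPrime
    obtain ⟨n, hn, hpn, he⟩ := hord
    have hnp : IsCoprime (n : ℤ) (p : ℤ) :=
      Nat.isCoprime_iff_coprime.2 ((hp.coprime_iff_not_dvd.2 hpn).symm)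
    have hη0 := aux_ne hn he
    have hζ0 := aux_ne hp.pos hζ
    have hP1 : (1 : ZB) ∉ P := fun h => hP.ne_top ((Ideal.eq_top_iff_one _).2 h)
    by_cases h1 : η = 1
    · rw [h1, mul_one]
      by_cases hz1 : ζ = 1
      · rw [hz1]
        exact ⟨1, hP1, 0, P.zero_mem, by simp⟩
      · apply UC.congMod
        have hne : ζ⁻¹ - ζ ≠ 0 := by
          have hodd : IsCoprime (2 * 1) (p : ℤ) := by
            have : Nat.Coprime 2 p := (Nat.coprime_primes Nat.prime_two hp).2
              (by rintro rfl; exact hpS htwo)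
            rw [mul_one]
            exact_mod_cast Nat.isCoprime_iff_coprime.2 this
          simpa using hfac ζ hζ0 hz1 p hζ 1 hodd
        have e : φ ζ = ∏ j, ((ζ ^ (-(a j)) - ζ ^ (a j)) / (ζ⁻¹ - ζ)) ^ (nn j) := by
          rw [hφ1 _ hz1]
          simp only [div_zpow]
          rw [Finset.prod_div_distrib, aux_zsum _ _ hne, hsum, zpow_zero, div_one]
        rw [e, hφ2]
        exact UC.prod fun j => (aux_cong2 hp hpP hζ (hpcop p hp hpS j).of_mul_left_right hne).zpow _
    · have h2 : ζ * η ≠ 1 := by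
        intro h
        apply h1
        apply aux_coprime hnp (by rw [zpow_natCast, he]) _ hη0
        have : (ζ * η) ^ p = 1 := by rw [h, one_pow]
        rwa [mul_pow, hζ, one_mul, ← zpow_natCast] at this
      apply UC.congMod
      rw [hφ1 _ h1, hφ1 _ h2]
      exact UC.prod fun j => (aux_cong1 hp hpP hζ hn hpn he (hwd η hη h1 j)).zpow _
end
end

section
/- Let φ : W_S → ℚ̄^× be an Euler system for S, let n be a nonzero integer, and let S′ = S ∪ {primes dividing n}. Then the map W_{S′} → ℚ̄^× given by η ↦ φ(ηⁿ) is an Euler system for S′. -/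
open scoped BigOperators

noncomputable section

theorem WS_zpow_mem {S : Finset ℕ} {n : ℤ} {η : Qbar}
    (h : η ∈ WS (S ∪ n.natAbs.primeFactors)) : η ∈ WS S ∧ η ^ n ∈ WS S := by
  obtain ⟨m, hm, hc, h1⟩ := h
  refine ⟨⟨m, hm, fun q hq => hc q (Finset.mem_union_left _ hq), h1⟩,
    ⟨m, hm, fun q hq => hc q (Finset.mem_union_left _ hq), ?_⟩⟩
  rw [← zpow_natCast, zpow_comm, zpow_natCast, h1, one_zpow]

theorem bijOn_zpow_mu {p : ℕ} (hp : p.Prime) {n : ℤ} (h : ¬ p ∣ n.natAbs) :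
    Set.BijOn (fun ζ : Qbar => ζ ^ n) {ζ | ζ ^ p = 1} {ζ | ζ ^ p = 1} := by
  have hcop : IsCoprime n (p : ℤ) := by
    rw [Int.isCoprime_iff_gcd_eq_one]
    exact ((Nat.Prime.coprime_iff_not_dvd hp).2 h).symm
  obtain ⟨a, b, hab⟩ := hcop
  have hmaps : ∀ k : ℤ, Set.MapsTo (fun ζ : Qbar => ζ ^ k) {ζ | ζ ^ p = 1} {ζ | ζ ^ p = 1} := by
    intro k ζ hζ
    have hζ' : ζ ^ p = 1 := hζ
    change (ζ ^ k) ^ p = 1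
    rw [← zpow_natCast, zpow_comm, zpow_natCast, hζ', one_zpow]
  have key : ∀ ζ : Qbar, ζ ^ p = 1 → ζ ^ (a * n) = 1 * ζ := by
    intro ζ hζ
    have h0 : ζ ≠ 0 := by
      rintro rfl
      rw [zero_pow hp.ne_zero] at hζ
      exact zero_ne_one hζ
    have e : a * n = (p : ℤ) * (-b) + 1 := by linarith
    rw [e, zpow_add₀ h0, zpow_mul, zpow_natCast, hζ, one_zpow, zpow_one]
  refine Set.InvOn.bijOn (f' := fun ζ : Qbar => ζ ^ a) ⟨?_, ?_⟩ (hmaps n) (hmaps a)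
  · intro ζ hζ
    change (ζ ^ n) ^ a = ζ
    rw [← zpow_mul, mul_comm, key ζ hζ, one_mul]
  · intro ζ hζ
    change (ζ ^ a) ^ n = ζ
    rw [← zpow_mul, key ζ hζ, one_mul]

/-- If `φ` is an Euler system for `S` and `n` is a nonzero integer, then
`η ↦ φ(ηⁿ)` is an Euler system for `S' = S ∪ {primes dividing n}`. -/
theorem eulerSystem_comp_zpow
    (S : Finset ℕ) (φ : Qbar → Qbar) (hφ : IsEulerSystem S φ)
    (n : ℤ) (hn : n ≠ 0) :
    IsEulerSystem (S ∪ n.natAbs.primeFactors) (fun η => φ (η ^ n)) := by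
  have hnd : ∀ p : ℕ, p.Prime → p ∉ S ∪ n.natAbs.primeFactors → p ∉ S ∧ ¬ p ∣ n.natAbs := by
    intro p hp h
    rw [Finset.mem_union, not_or] at h
    exact ⟨h.1, fun hd => h.2 (Nat.mem_primeFactors.2 ⟨hp, hd, Int.natAbs_ne_zero.2 hn⟩)⟩
  refine ⟨Finset.mem_union_left _ hφ.two_mem, ?_, ?_, ?_, ?_, ?_, ?_⟩
  · intro q hq
    rcases Finset.mem_union.1 hq with h | h
    · exact hφ.prime_mem q h
    · exact Nat.prime_of_mem_primeFactors h
  · intro η hη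
    exact hφ.ne_zero _ (WS_zpow_mem hη).2
  · intro σ η hη
    change φ ((σ η) ^ n) = σ (φ (η ^ n))
    rw [← map_zpow₀]
    exact hφ.galois_equivariant σ _ (WS_zpow_mem hη).2
  · intro η hη
    change φ (η⁻¹ ^ n) = φ (η ^ n)
    rw [inv_zpow]
    exact hφ.map_inv _ (WS_zpow_mem hη).2
  · intro p hp hpS η hη
    obtain ⟨h1, h2⟩ := hnd p hp hpS
    change (∏ᶠ (ζ : Qbar) (_ : ζ ^ p = 1), φ ((ζ * η) ^ n)) = φ ((η ^ p) ^ n)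
    have e : (η ^ p) ^ n = (η ^ n) ^ p := by
      rw [← zpow_natCast, zpow_comm, zpow_natCast]
    rw [e, ← hφ.norm_relation p hp h1 _ (WS_zpow_mem hη).2]
    exact finprod_mem_eq_of_bijOn (s := {ζ : Qbar | ζ ^ p = 1}) (t := {ζ : Qbar | ζ ^ p = 1})
      (f := fun ζ => φ ((ζ * η) ^ n)) (g := fun ζ => φ (ζ * η ^ n))
      (fun ζ => ζ ^ n) (bijOn_zpow_mu hp h2) (fun ζ _ => by simp only [mul_zpow])
  · intro p hp hpS η hη hord ζ hζ 𝔭 h𝔭 hp𝔭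
    obtain ⟨h1, h2⟩ := hnd p hp hpS
    obtain ⟨m, hm, hpm, hηm⟩ := hord
    change congMod 𝔭 (φ ((ζ * η) ^ n)) (φ (η ^ n))
    rw [mul_zpow]
    refine hφ.congruence p hp h1 _ (WS_zpow_mem hη).2 ⟨m, hm, hpm, ?_⟩ _
      ((bijOn_zpow_mu hp h2).mapsTo hζ) 𝔭 h𝔭 hp𝔭
    rw [← zpow_natCast, zpow_comm, zpow_natCast, hηm, one_zpow]
end
end

section
/- Let φ : W_S → ℚ̄^× be an Euler system for S, let h ≥ 1 be an integer coprime to every prime in S, let ξ be a primitive h-th root of unity, and let S′ = S ∪ {primes dividing h}. Then the map φ_ξ : W_{S′} → ℚ̄^× defined by φ_ξ(η) = ∏_{τ ∈ Gal(ℚ(ξ)/ℚ)} φ(η ξ^τ) is an Euler system for S′. -/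
open scoped BigOperators

noncomputable section

instance qbarAlg : Algebra.IsAlgebraic ℚ Qbar := by
  have h : @Algebra.IsAlgebraic ℚ Qbar _ _ (AlgebraicClosure.instAlgebra ℚ) :=
    AlgebraicClosure.isAlgebraic ℚ
  convert h
  exact Subsingleton.elim _ _

instance qbarInt : Algebra.IsIntegral ℚ Qbar :=
  Algebra.IsAlgebraic.isIntegral

instance qbarFracRing : IsFractionRing (integralClosure ℤ Qbar) Qbar := by
  have : Algebra.IsAlgebraic ℤ Qbar :=
    (IsFractionRing.comap_isAlgebraic_iff (A := ℤ) (K := ℚ) (C := Qbar)).mpr inferInstance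
  exact integralClosure.isFractionRing_of_algebraic (A := ℤ) (L := Qbar)
    (fun x hx => by simpa using hx)

/-- The local ring at `𝔭` inside `Qbar`. -/
def locRing (𝔭 : Ideal (integralClosure ℤ Qbar)) [𝔭.IsPrime] :
    Subalgebra (integralClosure ℤ Qbar) Qbar :=
  Localization.subalgebra.ofField Qbar 𝔭.primeCompl 𝔭.primeCompl_le_nonZeroDivisors

lemma mem_locRing (𝔭 : Ideal (integralClosure ℤ Qbar)) [𝔭.IsPrime] (x : Qbar) :
    x ∈ locRing 𝔭 ↔ ∃ c : integralClosure ℤ Qbar, c ∉ 𝔭 ∧ ∃ a : integralClosure ℤ Qbar,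
      x * (c : Qbar) = (a : Qbar) := by
  have hne : ∀ c : integralClosure ℤ Qbar, c ∉ 𝔭 → (c : Qbar) ≠ 0 := by
    intro c hc h0
    exact hc (by rw [show c = 0 from Subtype.ext h0]; exact 𝔭.zero_mem)
  constructor
  · rintro ⟨a, s, hs, rfl⟩
    refine ⟨s, hs, a, ?_⟩
    change (a : Qbar) * (s : Qbar)⁻¹ * s = a
    rw [mul_assoc, inv_mul_cancel₀ (hne s hs), mul_one]
  · rintro ⟨c, hc, a, h⟩
    refine ⟨a, c, hc, ?_⟩
    change x = (a : Qbar) * (c : Qbar)⁻¹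
    rw [← h, mul_assoc, mul_inv_cancel₀ (hne c hc), mul_one]

lemma mem_locRing_of_isIntegral (𝔭 : Ideal (integralClosure ℤ Qbar)) [𝔭.IsPrime] (x : Qbar)
    (hx : IsIntegral (locRing 𝔭) x) : x ∈ locRing 𝔭 := by
  have : IsLocalization 𝔭.primeCompl (locRing 𝔭) :=
    Localization.subalgebra.isLocalization_ofField _ _ _
  obtain ⟨⟨m, hm⟩, h⟩ := hx.exists_multiple_integral_of_isLocalization 𝔭.primeCompl x
  rw [mem_locRing]
  have h2 : IsIntegral ℤ ((m : Qbar) * x) := isIntegral_trans (A := integralClosure ℤ Qbar) _ h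
  exact ⟨m, hm, ⟨(m : Qbar) * x, h2⟩, mul_comm _ _⟩

lemma congMod.sub_mem {𝔭 : Ideal (integralClosure ℤ Qbar)} [𝔭.IsPrime] {x y : Qbar}
    (h : congMod 𝔭 x y) : x - y ∈ locRing 𝔭 := by
  obtain ⟨c, hc, u, -, h⟩ := h
  exact (mem_locRing 𝔭 _).2 ⟨c, hc, u, h⟩

lemma congMod.mul {𝔭 : Ideal (integralClosure ℤ Qbar)} [hp : 𝔭.IsPrime] {x y x' y' : Qbar}
    (h : congMod 𝔭 x x') (h' : congMod 𝔭 y y') (hx : x' ∈ locRing 𝔭) (hy : y' ∈ locRing 𝔭) :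
    congMod 𝔭 (x * y) (x' * y') := by
  obtain ⟨c, hc, u, hu, h⟩ := h
  obtain ⟨d, hd, v, hv, h'⟩ := h'
  obtain ⟨s, hs, a, hx⟩ := (mem_locRing 𝔭 _).1 hx
  obtain ⟨t, ht, b, hy⟩ := (mem_locRing 𝔭 _).1 hy
  refine ⟨c * d * (s * t), ?_, u * (v * s * t + d * s * b) + v * (a * c * t), ?_, ?_⟩
  · intro hm
    rcases hp.mem_or_mem hm with hm | hm <;> rcases hp.mem_or_mem hm with hm | hm <;>
      contradiction
  · exact 𝔭.add_mem (𝔭.mul_mem_right _ hu) (𝔭.mul_mem_right _ hv)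
  · push_cast
    rw [← h, ← h', ← hx, ← hy]
    ring

lemma congMod_prod {𝔭 : Ideal (integralClosure ℤ Qbar)} [hp : 𝔭.IsPrime] {ι : Type*}
    (s : Finset ι) (f g : ι → Qbar) (h : ∀ i ∈ s, congMod 𝔭 (f i) (g i))
    (hg : ∀ i ∈ s, g i ∈ locRing 𝔭) : congMod 𝔭 (∏ i ∈ s, f i) (∏ i ∈ s, g i) := by
  classical
  induction s using Finset.induction_on with
  | empty =>
    refine ⟨1, fun h1 => hp.ne_top ((Ideal.eq_top_iff_one _).2 h1), 0, 𝔭.zero_mem, by simp⟩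
  | insert a s ha ih =>
    rw [Finset.prod_insert ha, Finset.prod_insert ha]
    refine congMod.mul (h a (by simp)) (ih (fun i hi => h i (by simp [hi]))
      (fun i hi => hg i (by simp [hi]))) (hg a (by simp)) ?_
    exact prod_mem (fun i hi => hg i (by simp [hi]))

lemma finprod_pow_eq_one {p : ℕ} (hp : 0 < p) (f : Qbar → Qbar) :
    (∏ᶠ (ζ : Qbar) (_ : ζ ^ p = 1), f ζ) = ∏ ζ ∈ Polynomial.nthRootsFinset p (1 : Qbar), f ζ := by
  apply finprod_cond_eq_prod_of_cond_iff
  intro x _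
  rw [Polynomial.mem_nthRootsFinset hp]

lemma WS_mul {S : Finset ℕ} {a b : Qbar} (ha : a ∈ WS S) (hb : b ∈ WS S) : a * b ∈ WS S := by
  obtain ⟨n, hn, h1, h2⟩ := ha
  obtain ⟨m, hm, h3, h4⟩ := hb
  refine ⟨n * m, Nat.mul_pos hn hm, fun q hq => Nat.Coprime.mul_left (h1 q hq) (h3 q hq), ?_⟩
  rw [mul_pow, pow_mul, h2, mul_comm n m, pow_mul, h4]; simp

lemma WS_pow {S : Finset ℕ} {a : Qbar} (ha : a ∈ WS S) (k : ℕ) : a ^ k ∈ WS S := by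
  obtain ⟨n, hn, h1, h2⟩ := ha
  exact ⟨n, hn, h1, by rw [← pow_mul, mul_comm, pow_mul, h2, one_pow]⟩

lemma WS_inv {S : Finset ℕ} {a : Qbar} (ha : a ∈ WS S) : a⁻¹ ∈ WS S := by
  obtain ⟨n, hn, h1, h2⟩ := ha
  exact ⟨n, hn, h1, by rw [inv_pow, h2, inv_one]⟩

lemma isIntegral_of_fixed {R A : Type*} [CommRing R] [Nontrivial R] [CommRing A] [Algebra R A]
    {x : A} (P : Polynomial R) (hP : P.Monic) (hd : 1 < P.natDegree)
    (he : Polynomial.aeval x P = x) : IsIntegral R x := by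
  refine ⟨P - Polynomial.X, hP.sub_of_left ?_, ?_⟩
  · rw [Polynomial.degree_X, Polynomial.degree_eq_natDegree hP.ne_zero]
    exact_mod_cast hd
  · rw [← Polynomial.aeval_def, map_sub, he, Polynomial.aeval_X, sub_self]

/-- `φ(η)` is `𝔭`-integral when `η` has order prime to `p`. -/
lemma euler_mem_locRing {S : Finset ℕ} {φ : Qbar → Qbar} (hφ : IsEulerSystem S φ)
    {p : ℕ} (hp : p.Prime) (hpS : p ∉ S) {η : Qbar} (hη : η ∈ WS S)
    (hn : ∃ n : ℕ, 0 < n ∧ ¬ p ∣ n ∧ η ^ n = 1)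
    (𝔭 : Ideal (integralClosure ℤ Qbar)) [h𝔭 : 𝔭.IsMaximal]
    (hp𝔭 : (p : integralClosure ℤ Qbar) ∈ 𝔭) : φ η ∈ locRing 𝔭 := by
  obtain ⟨n, hn0, hpn, hηn⟩ := hn
  have key : ∀ k : ℕ, ∃ P : Polynomial (locRing 𝔭), P.Monic ∧ P.natDegree = p ^ k ∧
      Polynomial.aeval (φ η) P = φ (η ^ (p ^ k)) := by
    intro k
    induction k with
    | zero => exact ⟨Polynomial.X, Polynomial.monic_X, by simp, by simp⟩
    | succ k ih =>
      obtain ⟨P, hP, hd, he⟩ := ih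
      have hc : ∀ ζ ∈ Polynomial.nthRootsFinset p (1 : Qbar),
          φ (ζ * η ^ (p ^ k)) - φ (η ^ (p ^ k)) ∈ locRing 𝔭 := by
        intro ζ hζ
        rw [Polynomial.mem_nthRootsFinset hp.pos] at hζ
        exact (hφ.congruence p hp hpS _ (WS_pow hη _)
          ⟨n, hn0, hpn, by rw [← pow_mul, mul_comm, pow_mul, hηn, one_pow]⟩ ζ hζ 𝔭 h𝔭 hp𝔭).sub_mem
      have hζ1 : (Polynomial.nthRootsFinset p (1 : Qbar)).card = p := by
        have : NeZero p := ⟨hp.ne_zero⟩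
        obtain ⟨z, hz⟩ := HasEnoughRootsOfUnity.exists_primitiveRoot Qbar p
        exact hz.card_nthRootsFinset
      let Q : Polynomial (locRing 𝔭) :=
        ∏ ζ ∈ (Polynomial.nthRootsFinset p (1 : Qbar)).attach,
          (Polynomial.X + Polynomial.C (⟨_, hc ζ.1 ζ.2⟩ : locRing 𝔭))
      have hQ : Q.Monic := Polynomial.monic_prod_of_monic _ _
        (fun ζ _ => Polynomial.monic_X_add_C _)
      have hQd : Q.natDegree = p := by
        rw [Polynomial.natDegree_prod_of_monic _ _ (fun ζ _ => Polynomial.monic_X_add_C _)]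
        simp [hζ1]
      refine ⟨Q.comp P, hQ.comp hP (by rw [hd]; exact (pow_pos hp.pos k).ne'), ?_, ?_⟩
      · rw [Polynomial.natDegree_comp, hQd, hd, pow_succ, mul_comm]
      · rw [Polynomial.aeval_comp, he, map_prod, pow_succ, pow_mul,
          ← hφ.norm_relation p hp hpS _ (WS_pow hη _), finprod_pow_eq_one hp.pos,
          ← Finset.prod_attach (Polynomial.nthRootsFinset p (1 : Qbar))
            (fun ζ => φ (ζ * η ^ (p ^ k)))]
        refine Finset.prod_congr rfl (fun ζ _ => ?_)
        rw [map_add, Polynomial.aeval_X, Polynomial.aeval_C]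
        change φ (η ^ p ^ k) + (φ (ζ * η ^ (p ^ k)) - φ (η ^ (p ^ k))) = _
        ring
  apply mem_locRing_of_isIntegral
  obtain ⟨P, hP, hd, he⟩ := key n.totient
  have hcop : Nat.Coprime p n := (Nat.Prime.coprime_iff_not_dvd hp).2 hpn
  have hfix : η ^ (p ^ n.totient) = η := by
    have h1 := Nat.ModEq.pow_totient hcop
    obtain ⟨q, hq⟩ := (Nat.modEq_iff_dvd' (Nat.one_le_pow _ _ hp.pos)).1 h1.symm
    have h3 : p ^ n.totient = n * q + 1 := by
      have := Nat.one_le_pow n.totient p hp.pos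
      omega
    rw [h3, pow_add, pow_mul, hηn, one_pow, one_mul, pow_one]
  rw [hfix] at he
  have hlt : 1 < p ^ n.totient := Nat.one_lt_pow (Nat.totient_pos.2 hn0).ne' hp.one_lt
  exact isIntegral_of_fixed P hP (by rw [hd]; exact hlt) he

open IntermediateField in
lemma finprod_gal {h : ℕ} (hh : 1 ≤ h) {ξ : Qbar} (hξ : IsPrimitiveRoot ξ h) (f : Qbar → Qbar) :
    (∏ᶠ τ : ℚ⟮ξ⟯ ≃ₐ[ℚ] ℚ⟮ξ⟯,
        f ((τ ⟨ξ, IntermediateField.mem_adjoin_simple_self ℚ ξ⟩ : ℚ⟮ξ⟯) : Qbar)) =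
      ∏ ρ ∈ primitiveRoots h Qbar, f ρ := by
  classical
  have : NeZero h := ⟨by omega⟩
  have : IsCyclotomicExtension {h} ℚ ℚ⟮ξ⟯ := hξ.intermediateField_adjoin_isCyclotomicExtension ℚ
  have : FiniteDimensional ℚ ℚ⟮ξ⟯ := IsCyclotomicExtension.finiteDimensional {h} ℚ _
  have hcard : Fintype.card (ℚ⟮ξ⟯ ≃ₐ[ℚ] ℚ⟮ξ⟯) = (primitiveRoots h Qbar).card := by
    rw [hξ.card_primitiveRoots, ← ZMod.card_units_eq_totient]
    exact Fintype.card_congr (IsCyclotomicExtension.autEquivPow ℚ⟮ξ⟯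
      (Polynomial.cyclotomic.irreducible_rat (by omega))).toEquiv
  rw [finprod_eq_prod_of_fintype]
  set g : (ℚ⟮ξ⟯ ≃ₐ[ℚ] ℚ⟮ξ⟯) → Qbar := fun τ =>
    ((τ ⟨ξ, IntermediateField.mem_adjoin_simple_self ℚ ξ⟩ : ℚ⟮ξ⟯) : Qbar) with hg
  have hmaps : ∀ τ ∈ (Finset.univ : Finset (ℚ⟮ξ⟯ ≃ₐ[ℚ] ℚ⟮ξ⟯)), g τ ∈ primitiveRoots h Qbar := by
    intro τ _
    rw [mem_primitiveRoots (by omega)]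
    have h0 : IsPrimitiveRoot (⟨ξ, IntermediateField.mem_adjoin_simple_self ℚ ξ⟩ : ℚ⟮ξ⟯) h :=
      IsPrimitiveRoot.coe_submonoidClass_iff.1 hξ
    exact IsPrimitiveRoot.coe_submonoidClass_iff.2 (h0.map_of_injective τ.injective)
  have hinj : Set.InjOn g (Finset.univ : Finset (ℚ⟮ξ⟯ ≃ₐ[ℚ] ℚ⟮ξ⟯)) := by
    intro τ _ τ' _ he
    have he' := Subtype.ext he
    have : (τ : ℚ⟮ξ⟯ →ₐ[ℚ] ℚ⟮ξ⟯) = τ' := by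
      apply (IntermediateField.adjoin.powerBasis
        (Algebra.IsIntegral.isIntegral (R := ℚ) ξ)).algHom_ext
      rw [IntermediateField.adjoin.powerBasis_gen]
      exact he'
    ext x
    exact congrArg _ (DFunLike.congr_fun this x)
  refine Finset.prod_nbij g hmaps hinj ?_ (fun _ _ => rfl)
  exact Finset.surjOn_of_injOn_of_card_le g hmaps hinj (by rw [Finset.card_univ, hcard])

lemma prod_primitiveRoots_comp {h : ℕ} (e f : Qbar → Qbar)
    (hm : ∀ ρ ∈ primitiveRoots h Qbar, e ρ ∈ primitiveRoots h Qbar)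
    (hi : Set.InjOn e (primitiveRoots h Qbar)) :
    ∏ ρ ∈ primitiveRoots h Qbar, f (e ρ) = ∏ ρ ∈ primitiveRoots h Qbar, f ρ :=
  Finset.prod_nbij e hm hi (Finset.surjOn_of_injOn_of_card_le e hm hi le_rfl) (fun _ _ => rfl)

open IntermediateField in
/-- If `φ` is an Euler system for `S`, `h ≥ 1` is coprime to every prime
in `S`, and `ξ` is a primitive `h`-th root of unity, then
`φ_ξ(η) = ∏_{τ ∈ Gal(ℚ(ξ)/ℚ)} φ(η ξ^τ)` is an Euler system for
`S' = S ∪ {primes dividing h}`. -/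
theorem eulerSystem_twist_by_root_of_unity
    (S : Finset ℕ) (φ : Qbar → Qbar) (hφ : IsEulerSystem S φ)
    (h : ℕ) (hh : 1 ≤ h) (hcop : ∀ q ∈ S, Nat.Coprime h q)
    (ξ : Qbar) (hξ : IsPrimitiveRoot ξ h) :
    IsEulerSystem (S ∪ h.primeFactors)
      (fun η => ∏ᶠ τ : ℚ⟮ξ⟯ ≃ₐ[ℚ] ℚ⟮ξ⟯,
        φ (η * ((τ ⟨ξ, IntermediateField.mem_adjoin_simple_self ℚ ξ⟩ : ℚ⟮ξ⟯) : Qbar))) := by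
  have heq : (fun η => ∏ᶠ τ : ℚ⟮ξ⟯ ≃ₐ[ℚ] ℚ⟮ξ⟯,
        φ (η * ((τ ⟨ξ, IntermediateField.mem_adjoin_simple_self ℚ ξ⟩ : ℚ⟮ξ⟯) : Qbar))) =
      fun η => ∏ ρ ∈ primitiveRoots h Qbar, φ (η * ρ) := by
    funext η
    exact finprod_gal hh hξ (fun ρ => φ (η * ρ))
  rw [heq]
  have hmem : ∀ ρ ∈ primitiveRoots h Qbar, IsPrimitiveRoot ρ h := fun ρ hρ =>
    (mem_primitiveRoots (by omega)).1 hρ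
  have hW : ∀ η ∈ WS (S ∪ h.primeFactors), η ∈ WS S := by
    rintro η ⟨n, hn, h1, h2⟩
    exact ⟨n, hn, fun q hq => h1 q (Finset.mem_union_left _ hq), h2⟩
  have hρW : ∀ ρ ∈ primitiveRoots h Qbar, ρ ∈ WS S := fun ρ hρ =>
    ⟨h, hh, hcop, (hmem ρ hρ).pow_eq_one⟩
  have hpp : ∀ p : ℕ, p.Prime → p ∉ S ∪ h.primeFactors → p ∉ S ∧ ¬ p ∣ h := by
    intro p hp hpS
    rw [Finset.mem_union, not_or] at hpS
    exact ⟨hpS.1, fun hd => hpS.2 (Nat.mem_primeFactors.2 ⟨hp, hd, by omega⟩)⟩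
  refine ⟨Finset.mem_union_left _ hφ.two_mem, ?_, ?_, ?_, ?_, ?_, ?_⟩
  · intro q hq
    rcases Finset.mem_union.1 hq with hq | hq
    · exact hφ.prime_mem q hq
    · exact Nat.prime_of_mem_primeFactors hq
  · intro η hη
    exact Finset.prod_ne_zero_iff.2 (fun ρ hρ => hφ.ne_zero _ (WS_mul (hW η hη) (hρW ρ hρ)))
  · intro σ η hη
    rw [map_prod]
    rw [← prod_primitiveRoots_comp (fun ρ => σ ρ) (fun ρ => φ (σ η * ρ))
      (fun ρ hρ => (mem_primitiveRoots (by omega)).2 ((hmem ρ hρ).map_of_injective σ.injective))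
      (σ.injective.injOn)]
    refine Finset.prod_congr rfl (fun ρ hρ => ?_)
    rw [← map_mul, hφ.galois_equivariant σ _ (WS_mul (hW η hη) (hρW ρ hρ))]
  · intro η hη
    rw [← prod_primitiveRoots_comp (fun ρ => ρ⁻¹) (fun ρ => φ (η⁻¹ * ρ))
      (fun ρ hρ => (mem_primitiveRoots (by omega)).2 (hmem ρ hρ).inv)
      (inv_injective.injOn)]
    refine Finset.prod_congr rfl (fun ρ hρ => ?_)
    rw [← mul_inv, hφ.map_inv _ (WS_mul (hW η hη) (hρW ρ hρ))]
  · intro p hp hpS η hη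
    obtain ⟨hpS, hph⟩ := hpp p hp hpS
    have hc : Nat.Coprime p h := (Nat.Prime.coprime_iff_not_dvd hp).2 hph
    rw [finprod_pow_eq_one hp.pos, Finset.prod_comm]
    rw [← prod_primitiveRoots_comp (fun ρ => ρ ^ p) (fun ρ => φ (η ^ p * ρ))
      (fun ρ hρ => (mem_primitiveRoots (by omega)).2 ((hmem ρ hρ).pow_of_coprime p hc)) ?_]
    · refine Finset.prod_congr rfl (fun ρ hρ => ?_)
      rw [← mul_pow, ← hφ.norm_relation p hp hpS _ (WS_mul (hW η hη) (hρW ρ hρ)),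
        finprod_pow_eq_one hp.pos]
      simp only [mul_assoc]
    · intro a ha b hb hab
      have ha := hmem a ha
      have hb := hmem b hb
      have hb0 : b ≠ 0 := hb.ne_zero (by omega)
      have hab : a ^ p = b ^ p := hab
      have h1 : (a / b) ^ p = 1 := by rw [div_pow, hab, div_self (pow_ne_zero _ hb0)]
      have h2 : (a / b) ^ h = 1 := by rw [div_pow, ha.pow_eq_one, hb.pow_eq_one, div_one]
      have h3 : orderOf (a / b) ∣ 1 := by
        rw [← hc]
        exact Nat.dvd_gcd (orderOf_dvd_of_pow_eq_one h1) (orderOf_dvd_of_pow_eq_one h2)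
      have h4 : a / b = 1 := orderOf_eq_one_iff.1 (Nat.dvd_one.1 h3)
      exact (div_eq_one_iff_eq hb0).1 h4
  · intro p hp hpS η hη hn ζ hζ 𝔭 h𝔭 hp𝔭
    obtain ⟨hpS, hph⟩ := hpp p hp hpS
    obtain ⟨n, hn0, hpn, hηn⟩ := hn
    have hord : ∀ ρ ∈ primitiveRoots h Qbar, ∃ n : ℕ, 0 < n ∧ ¬ p ∣ n ∧ (η * ρ) ^ n = 1 := by
      intro ρ hρ
      refine ⟨n * h, Nat.mul_pos hn0 hh, fun hd => ?_, ?_⟩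
      · rcases hp.dvd_mul.1 hd with hd | hd <;> contradiction
      · rw [mul_pow, pow_mul, hηn, mul_comm n h, pow_mul, (hmem ρ hρ).pow_eq_one]; simp
    refine congMod_prod _ _ _ (fun ρ hρ => ?_) (fun ρ hρ => ?_)
    · rw [mul_assoc]
      exact hφ.congruence p hp hpS _ (WS_mul (hW η hη) (hρW ρ hρ)) (hord ρ hρ) ζ hζ 𝔭 h𝔭 hp𝔭
    · exact euler_mem_locRing hφ hp hpS (WS_mul (hW η hη) (hρW ρ hρ)) (hord ρ hρ) 𝔭 hp𝔭
end
end

section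
/- (Proposition 2.2) Let φ be an Euler system for S, let m ≥ 1 be coprime to every prime in S, and let η ∈ μ_m. Let p be a rational prime with p ∤ m and p ∉ S. For each n ≥ 0 let ζ_n be a primitive p^{n+1}-th root of unity with ζ_{n+1}^p = ζ_n, and for n ≥ 0 let c_n be an integer with c_n p^n ≡ 1 (mod m) (so η ↦ η^{c_n} realizes Frob_p^{−n} on μ_m). Then for every n ≥ 1, N_{H_{mp^{n+1}}/H_{mp^n}}(φ(ζ_n η^{c_n})) = φ(ζ_{n−1} η^{c_{n−1}}); that is, the sequence φ(ζ_n η^{Frob_p^{−n}}), n = 0, 1, 2, …, is norm compatible in the tower of fields H_{mp^{n+1}}. -/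
open scoped BigOperators

noncomputable section

/-- `H_m = ℚ(μ_m)⁺`, the maximal real subfield of the `m`-th cyclotomic field, realized
inside `ℚ̄` as the field generated by the elements `ζ + ζ⁻¹` for `ζ ∈ μ_m`. -/
def Hplus (m : ℕ) : IntermediateField ℚ Qbar :=
  IntermediateField.adjoin ℚ {x : Qbar | ∃ ζ : Qbar, ζ ^ m = 1 ∧ x = ζ + ζ⁻¹}

instance esn_isAlgebraic : Algebra.IsAlgebraic ℚ Qbar := by
  have h := AlgebraicClosure.isAlgebraic ℚ
  have e : (AlgebraicClosure.instAlgebra ℚ : Algebra ℚ Qbar) = DivisionRing.toRatAlgebra :=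
    Subsingleton.elim _ _
  rw [e] at h
  exact h

instance esn_isAlgClosure : IsAlgClosure ℚ Qbar := ⟨inferInstance, inferInstance⟩

instance esn_normal : Normal ℚ Qbar := IsAlgClosure.normal ℚ Qbar

instance esn_isGalois : IsGalois ℚ Qbar := ⟨⟩

lemma esn_inv_cases {a b : Qbar} (ha : a ≠ 0) (hb : b ≠ 0) (h : a + a⁻¹ = b + b⁻¹) :
    a = b ∨ a = b⁻¹ := by
  have h1 : (a - b) * (a * b - 1) = 0 := by
    field_simp at h
    linear_combination h
  rcases mul_eq_zero.mp h1 with h2 | h2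
  · exact Or.inl (sub_eq_zero.mp h2)
  · exact Or.inr (eq_inv_of_mul_eq_one_left (sub_eq_zero.mp h2))

lemma esn_agree {n : ℕ} (hn : 0 < n) {ω : Qbar} (hω : IsPrimitiveRoot ω n)
    (g h : Qbar →ₐ[ℚ] Qbar) (hgh : g ω = h ω ∨ g ω = (h ω)⁻¹) :
    ∀ x ∈ Hplus n, g x = h x := by
  intro x hx
  have : NeZero n := ⟨hn.ne'⟩
  unfold Hplus at hx
  induction hx using IntermediateField.adjoin_induction with
  | mem x hx =>
    obtain ⟨z, hz, rfl⟩ := hx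
    obtain ⟨i, -, rfl⟩ := hω.eq_pow_of_pow_eq_one hz
    rcases hgh with h1 | h1
    · simp only [map_add, map_inv₀, map_pow, h1]
    · simp only [map_add, map_inv₀, map_pow, h1, inv_pow, inv_inv]
      rw [add_comm]
  | algebraMap x => rw [AlgHom.commutes, AlgHom.commutes]
  | add x y _ _ hx hy => rw [map_add, map_add, hx, hy]
  | inv x _ hx => rw [map_inv₀, map_inv₀, hx]
  | mul x y _ _ hx hy => rw [map_mul, map_mul, hx, hy]

lemma esn_gen_mem {n : ℕ} {ω : Qbar} (hω : ω ^ n = 1) : ω + ω⁻¹ ∈ Hplus n :=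
  IntermediateField.subset_adjoin _ _ ⟨ω, hω, rfl⟩

lemma esn_cases {n : ℕ} (hn : 0 < n) {ω : Qbar} (hω : ω ^ n = 1)
    (g h : Qbar →ₐ[ℚ] Qbar) (hgh : ∀ x ∈ Hplus n, g x = h x) :
    g ω = h ω ∨ g ω = (h ω)⁻¹ := by
  have h0 : ω ≠ 0 := by
    rintro rfl
    simp [hn.ne'] at hω
  have h1 := hgh _ (esn_gen_mem hω)
  simp only [map_add, map_inv₀] at h1
  exact esn_inv_cases (by simpa using h0) (by simpa using h0) h1

lemma esn_mem (S : Finset ℕ) (φ : Qbar → Qbar) (hφ : IsEulerSystem S φ)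
    {n : ℕ} (hn : 0 < n) (hnS : ∀ q ∈ S, Nat.Coprime n q) {x : Qbar} (hx : x ^ n = 1) :
    φ x ∈ Hplus n := by
  have hxW : x ∈ WS S := ⟨n, hn, hnS, hx⟩
  rw [← InfiniteGalois.fixedField_fixingSubgroup (Hplus n)]
  rw [IntermediateField.mem_fixedField_iff]
  intro σ hσ
  rw [IntermediateField.mem_fixingSubgroup_iff] at hσ
  rw [← hφ.galois_equivariant σ x hxW]
  rcases esn_cases hn hx (σ : Qbar →ₐ[ℚ] Qbar) (AlgHom.id ℚ Qbar)
    (fun y hy => hσ y hy) with h1 | h1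
  · have h2 : σ x = x := h1
    rw [h2]
  · have h2 : σ x = x⁻¹ := h1
    rw [h2, hφ.map_inv x hxW]

lemma esn_finite {n : ℕ} (hn : 0 < n) : FiniteDimensional ℚ (Hplus n) := by
  have : Finite {x : Qbar | ∃ ζ : Qbar, ζ ^ n = 1 ∧ x = ζ + ζ⁻¹} := by
    have h1 : {ζ : Qbar | ζ ^ n = 1}.Finite := by
      refine (Polynomial.nthRootsFinset n (1 : Qbar)).finite_toSet.subset ?_
      intro z hz
      simpa [Polynomial.mem_nthRootsFinset hn] using hz
    refine (h1.image (fun z => z + z⁻¹)).subset ?_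
    rintro x ⟨z, hz, rfl⟩
    exact ⟨z, hz, rfl⟩
  exact IntermediateField.finiteDimensional_adjoin
    (fun x _ => (Algebra.IsAlgebraic.isAlgebraic x).isIntegral)

lemma esn_norm {N M p : ℕ} (hp : p.Prime) (hN : 3 ≤ N) (hpN : p ∣ N) (hM : M = N * p)
    (hle : Hplus N ≤ Hplus M) {ω : Qbar} (hω : IsPrimitiveRoot ω M)
    (x : Qbar) (hx : x ∈ Hplus M) (F : Qbar → Qbar)
    (hF : ∀ σ : Qbar ≃ₐ[ℚ] Qbar, ∀ ξ : Qbar, ξ ^ p = 1 → σ ω = ξ * ω → σ x = F ξ) :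
    ((Algebra.norm ↥(Hplus N)
          (⟨x, (IntermediateField.mem_extendScalars hle).mpr hx⟩ :
            ↥(IntermediateField.extendScalars hle)) : ↥(Hplus N)) : Qbar)
      = ∏ᶠ (ξ : Qbar) (_ : ξ ^ p = 1), F ξ := by
  have hNpos : 0 < N := by omega
  have hMpos : 0 < M := by rw [hM]; exact Nat.mul_pos hNpos hp.pos
  have hω0 : ω ≠ 0 := hω.ne_zero hMpos.ne'
  have hωp : IsPrimitiveRoot (ω ^ p) N := hω.pow hMpos (by rw [hM, mul_comm])
  -- existence of automorphisms
  have hex : ∀ ξ : {ξ : Qbar // ξ ^ p = 1}, ∃ σ : Qbar ≃ₐ[ℚ] Qbar, σ ω = ξ * ω := by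
    rintro ⟨ξ, hξ⟩
    have hprim : IsPrimitiveRoot (ξ * ω) M := by
      have hpow : (ξ * ω) ^ p = ω ^ p := by rw [mul_pow, hξ, one_mul]
      refine ⟨?_, fun l hl => ?_⟩
      · rw [hM, mul_comm N p, pow_mul, hpow, ← pow_mul, mul_comm p N, ← hM, hω.pow_eq_one]
      · have h1 : (ω ^ p) ^ l = 1 := by
          rw [← hpow, ← pow_mul, mul_comm p l, pow_mul, hl, one_pow]
        have h2 : N ∣ l := hωp.dvd_of_pow_eq_one l h1
        obtain ⟨t, rfl⟩ := hpN.trans h2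
        refine hω.dvd_of_pow_eq_one _ ?_
        rwa [mul_pow, pow_mul ξ, hξ, one_pow, one_mul] at hl
    have hc : IsConjRoot ℚ (ξ * ω) ω := by
      unfold IsConjRoot
      rw [← Polynomial.cyclotomic_eq_minpoly_rat hprim hMpos,
        ← Polynomial.cyclotomic_eq_minpoly_rat hω hMpos]
    exact isConjRoot_iff_exists_algEquiv.mp hc
  choose τ hτ using hex
  have hτK : ∀ ξ, ∀ y ∈ Hplus N, τ ξ y = y := by
    intro ξ
    refine esn_agree hNpos hωp (τ ξ : Qbar →ₐ[ℚ] Qbar) (AlgHom.id ℚ Qbar) (Or.inl ?_)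
    change τ ξ (ω ^ p) = ω ^ p
    rw [map_pow, hτ, mul_pow, ξ.2, one_mul]
  have : FiniteDimensional ℚ (Hplus M) := esn_finite hMpos
  have : FiniteDimensional ℚ (IntermediateField.extendScalars hle) := this
  have : FiniteDimensional (Hplus N) (IntermediateField.extendScalars hle) :=
    FiniteDimensional.right ℚ _ _
  let τK : {ξ : Qbar // ξ ^ p = 1} → (Qbar →ₐ[Hplus N] Qbar) := fun ξ =>
    { (τ ξ : Qbar →+* Qbar) with commutes' := fun y => hτK ξ y y.2 }
  have hτKa : ∀ ξ y, τK ξ y = τ ξ y := fun _ _ => rfl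
  let e : {ξ : Qbar // ξ ^ p = 1} → (IntermediateField.extendScalars hle →ₐ[Hplus N] Qbar) :=
    fun ξ => (τK ξ).comp (IntermediateField.extendScalars hle).val
  have hea : ∀ ξ y, e ξ y = τ ξ y := fun _ _ => rfl
  have hinj : Function.Injective e := by
    rintro ξ ξ' h
    have h1 : ∀ y ∈ Hplus M, τ ξ y = τ ξ' y := by
      intro y hy
      exact DFunLike.congr_fun h
        (⟨y, (IntermediateField.mem_extendScalars hle).mpr hy⟩ :
          IntermediateField.extendScalars hle)
    rcases esn_cases hMpos hω.pow_eq_one (τ ξ : Qbar →ₐ[ℚ] Qbar) (τ ξ' : Qbar →ₐ[ℚ] Qbar) h1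
      with h2 | h2
    · change τ ξ ω = τ ξ' ω at h2
      rw [hτ, hτ] at h2
      exact Subtype.ext (mul_right_cancel₀ hω0 h2)
    · exfalso
      change τ ξ ω = (τ ξ' ω)⁻¹ at h2
      rw [hτ, hτ] at h2
      have h3 := congrArg (· ^ p) h2
      simp only [mul_pow, inv_pow, ξ.2, ξ'.2, one_mul] at h3
      have h4 : (ω ^ p) ^ 2 = 1 := by
        rw [pow_two]
        nth_rewrite 1 [h3]
        exact inv_mul_cancel₀ (pow_ne_zero _ hω0)
      have h5 := Nat.le_of_dvd (by norm_num) (hωp.dvd_of_pow_eq_one 2 h4)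
      omega
  have hsurj : Function.Surjective e := by
    intro f
    have : Algebra.IsAlgebraic (IntermediateField.extendScalars hle) Qbar :=
      Algebra.IsAlgebraic.tower_top (K := ℚ) (IntermediateField.extendScalars hle)
    obtain ⟨g, hg⟩ := IsAlgClosed.surjective_domRestrict_of_isAlgebraic
      (K := Hplus N) (L := IntermediateField.extendScalars hle) (M := Qbar) (E := Qbar) f
    have hgf : ∀ y : IntermediateField.extendScalars hle, g y = f y := fun y =>
      DFunLike.congr_fun hg y
    let g' : Qbar →ₐ[ℚ] Qbar := g.restrictScalars ℚ
    have hg0 : g' ω ≠ 0 := by simpa using hω0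
    have hgc := esn_cases hNpos hωp.pow_eq_one g' (AlgHom.id ℚ Qbar)
      (fun y hy => g.commutes ⟨y, hy⟩)
    have key : ∃ ξ : {ξ : Qbar // ξ ^ p = 1}, g' ω = τ ξ ω ∨ g' ω = (τ ξ ω)⁻¹ := by
      simp only [map_pow, AlgHom.id_apply] at hgc
      rcases hgc with h | h
      · refine ⟨⟨g' ω * ω⁻¹, ?_⟩, Or.inl ?_⟩
        · rw [mul_pow, h, inv_pow, mul_inv_cancel₀ (pow_ne_zero _ hω0)]
        · rw [hτ]
          simp [hω0]
      · refine ⟨⟨(g' ω)⁻¹ * ω⁻¹, ?_⟩, Or.inr ?_⟩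
        · rw [mul_pow, inv_pow, inv_pow, h, inv_inv, mul_inv_cancel₀ (pow_ne_zero _ hω0)]
        · rw [hτ]
          simp [hω0]
    obtain ⟨ξ, hξ⟩ := key
    refine ⟨ξ, ?_⟩
    ext y
    rw [hea, ← hgf]
    exact (esn_agree hMpos hω g' (τ ξ : Qbar →ₐ[ℚ] Qbar) hξ y y.2).symm
  have hnorm := Algebra.norm_eq_prod_embeddings (Hplus N) Qbar
    (⟨x, (IntermediateField.mem_extendScalars hle).mpr hx⟩ :
            ↥(IntermediateField.extendScalars hle))
  refine hnorm.trans ?_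
  rw [← finprod_eq_prod_of_fintype, ← finprod_subtype_eq_finprod_cond]
  refine (finprod_eq_of_bijective e ⟨hinj, hsurj⟩ fun ξ => ?_).symm
  rw [hea]
  exact (hF (τ ξ) ξ ξ.2 (hτ ξ)).symm

open IntermediateField in
/-- Proposition 2.2. Let `φ` be an Euler system for `S`, `η ∈ μ_m`
(`m` coprime to `S`), `p ∤ m` a prime not in `S`, `ζ_k` a compatible system of primitive
`p^{k+1}`-th roots of unity, and `c_k` integers with `c_k p^k ≡ 1 (mod m)` (so that
`η ↦ η^{c_k}` realizes `Frob_p^{-k}` on `μ_m`).  Then for every `k ≥ 0`,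
`N_{H_{mp^{k+2}}/H_{mp^{k+1}}}(φ(ζ_{k+1} η^{c_{k+1}})) = φ(ζ_k η^{c_k})`; i.e. the
sequence `φ(ζ_k η^{Frob_p^{-k}})` is norm compatible in the tower `(H_{mp^{k+1}})_k`. -/
theorem euler_system_norm_compatible_tower
    (S : Finset ℕ) (φ : Qbar → Qbar) (hφ : IsEulerSystem S φ)
    (m : ℕ) (hm : 1 ≤ m) (hmS : ∀ q ∈ S, Nat.Coprime m q)
    (η : Qbar) (hη : η ^ m = 1)
    (p : ℕ) (hp : p.Prime) (hpm : ¬ p ∣ m) (hpS : p ∉ S)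
    (ζ : ℕ → Qbar) (hζ : ∀ k, IsPrimitiveRoot (ζ k) (p ^ (k + 1)))
    (hζcomp : ∀ k, ζ (k + 1) ^ p = ζ k)
    (c : ℕ → ℤ) (hc : ∀ k, (m : ℤ) ∣ c k * (p : ℤ) ^ k - 1) :
    ∀ k : ℕ, ∃ (h1 : φ (ζ (k + 1) * η ^ c (k + 1)) ∈ Hplus (m * p ^ (k + 2)))
      (hle : Hplus (m * p ^ (k + 1)) ≤ Hplus (m * p ^ (k + 2))),
      ((Algebra.norm ↥(Hplus (m * p ^ (k + 1)))
          (⟨φ (ζ (k + 1) * η ^ c (k + 1)),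
            (IntermediateField.mem_extendScalars hle).mpr h1⟩ :
            ↥(IntermediateField.extendScalars hle)) : ↥(Hplus (m * p ^ (k + 1)))) : Qbar)
        = φ (ζ k * η ^ c k) := by
  intro k
  have hp2 : 3 ≤ p := by
    have h1 : p ≠ 2 := fun h => hpS (h ▸ hφ.two_mem)
    have := hp.two_le
    omega
  have hpcS : ∀ q ∈ S, Nat.Coprime p q := fun q hq =>
    (Nat.coprime_primes hp (hφ.prime_mem q hq)).mpr (fun h => hpS (h ▸ hq))
  have hpmc : Nat.Coprime p m := (Nat.Prime.coprime_iff_not_dvd hp).mpr hpm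
  have hM : m * p ^ (k + 2) = m * p ^ (k + 1) * p := by ring
  have hMpos : 0 < m * p ^ (k + 2) := Nat.mul_pos hm (pow_pos hp.pos _)
  have hMS : ∀ q ∈ S, Nat.Coprime (m * p ^ (k + 2)) q := fun q hq =>
    Nat.Coprime.mul_left (hmS q hq) (Nat.Coprime.pow_left _ (hpcS q hq))
  have hηz : ∀ a : ℤ, (η ^ a) ^ m = 1 := fun a => by
    rw [← zpow_natCast, ← zpow_mul, mul_comm, zpow_mul, zpow_natCast, hη, one_zpow]
  have hζ1 : ζ (k + 1) ^ (p ^ (k + 2)) = 1 := (hζ (k + 1)).pow_eq_one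
  have hxM : (ζ (k + 1) * η ^ c (k + 1)) ^ (m * p ^ (k + 2)) = 1 := by
    rw [mul_pow, pow_mul (η ^ c (k + 1)), hηz, mul_comm m, pow_mul, hζ1, one_pow, one_pow, one_mul]
  have hxW : ζ (k + 1) * η ^ c (k + 1) ∈ WS S := ⟨_, hMpos, hMS, hxM⟩
  have h1 := esn_mem S φ hφ hMpos hMS hxM
  have hle : Hplus (m * p ^ (k + 1)) ≤ Hplus (m * p ^ (k + 2)) := by
    refine IntermediateField.adjoin.mono _ _ _ ?_
    rintro x ⟨z, hz, rfl⟩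
    refine ⟨z, ?_, rfl⟩
    rw [hM, pow_mul, hz, one_pow]
  refine ⟨h1, hle, ?_⟩
  have : NeZero (m : Qbar) := ⟨by exact_mod_cast (by omega : m ≠ 0)⟩
  obtain ⟨ε, hε⟩ := HasEnoughRootsOfUnity.exists_primitiveRoot Qbar m
  have hω : IsPrimitiveRoot (ζ (k + 1) * ε) (m * p ^ (k + 2)) := by
    have e1 := (hζ (k + 1)).eq_orderOf
    have e2 := hε.eq_orderOf
    have e3 := (Commute.all (ζ (k + 1)) ε).orderOf_mul_eq_mul_orderOf_of_coprime (by
      rw [← e1, ← e2]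
      exact Nat.Coprime.pow_left _ hpmc)
    rw [← e1, ← e2, mul_comm (p ^ (k + 1 + 1))] at e3
    rw [show m * p ^ (k + 2) = m * p ^ (k + 1 + 1) from rfl, ← e3]
    exact IsPrimitiveRoot.orderOf _
  have hN3 : 3 ≤ m * p ^ (k + 1) := by
    have h2 : p ≤ p ^ (k + 1) := Nat.le_self_pow (by omega) p
    nlinarith
  have hpN : p ∣ m * p ^ (k + 1) := Dvd.dvd.mul_left (dvd_pow_self p (by omega)) m
  have hωp : IsPrimitiveRoot ((ζ (k + 1) * ε) ^ p) (m * p ^ (k + 1)) :=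
    hω.pow hMpos (by rw [hM, mul_comm])
  have hNz : NeZero (m * p ^ (k + 1)) := ⟨by omega⟩
  rw [esn_norm hp hN3 hpN hM hle hω _ h1
    (fun ξ => φ (ξ * (ζ (k + 1) * η ^ c (k + 1)))) ?_]
  · rw [hφ.norm_relation p hp hpS _ hxW, mul_pow, hζcomp]
    congr 2
    rw [← zpow_natCast, ← zpow_mul]
    have hd : (m : ℤ) ∣ c (k + 1) * p - c k := by
      have h2 : (m : ℤ) ∣ (p : ℤ) ^ k * (c (k + 1) * p - c k) := by
        have := dvd_sub (hc (k + 1)) (hc k)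
        have e : (p : ℤ) ^ k * (c (k + 1) * p - c k)
            = c (k + 1) * (p : ℤ) ^ (k + 1) - 1 - (c k * (p : ℤ) ^ k - 1) := by ring
        rw [e]
        exact this
      refine IsCoprime.dvd_of_dvd_mul_left ?_ h2
      exact (Nat.isCoprime_iff_coprime.mpr hpmc.symm).pow_right
    obtain ⟨t, ht⟩ := hd
    have hη0 : η ≠ 0 := by
      rintro rfl
      rw [zero_pow (by omega)] at hη
      exact zero_ne_one hη
    rw [show c (k + 1) * (p : ℤ) = c k + m * t by linarith, zpow_add₀ hη0, zpow_mul,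
      zpow_natCast, hη, one_zpow, mul_one]
  · intro σ ξ hξ hσ
    have hfix : ∀ z : Qbar, z ^ m = 1 → σ z = z := by
      intro z hz
      obtain ⟨i, -, rfl⟩ := hωp.eq_pow_of_pow_eq_one
        (show z ^ (m * p ^ (k + 1)) = 1 by rw [pow_mul, hz, one_pow])
      rw [map_pow, map_pow, hσ, mul_pow ξ, hξ, one_mul]
    rw [← hφ.galois_equivariant σ _ hxW]
    congr 1
    have hε0 : ε ≠ 0 := hε.ne_zero (by omega)
    rw [map_mul, hfix ε hε.pow_eq_one, ← mul_assoc] at hσ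
    rw [map_mul, hfix _ (hηz _), mul_right_cancel₀ hε0 hσ, mul_assoc]
end
end

section
/- (Proposition 2.3) Let φ be an Euler system for S. Then for every η ∈ W_S with η ≠ 1, φ(η) is a unit in the ring of integers of the real cyclotomic field ℚ(η)⁺; in particular φ(η) is an algebraic unit. -/
open scoped BigOperators

noncomputable section

section
open NumberField Ideal IsDedekindDomain WithZero

lemma relNorm_count_dvd {K L : Type*} [Field K] [Field L] [NumberField K] [NumberField L]
    [Algebra K L] (ℓ F : ℕ) [hℓ : Fact ℓ.Prime] (v : HeightOneSpectrum (𝓞 K))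
    [v.asIdeal.LiesOver (span {(ℓ : ℤ)})]
    (hF : ∀ P : Ideal (𝓞 L), P.IsPrime → P.LiesOver (span {(ℓ : ℤ)}) → inertiaDeg P ℤ = F)
    (I : Ideal (𝓞 L)) (hI : I ≠ ⊥) :
    F ∣ inertiaDeg v.asIdeal ℤ *
      (Associates.mk v.asIdeal).count (Associates.mk (relNorm (𝓞 K) I)).factors := by
  have hv := v.associates_irreducible
  induction I using UniqueFactorizationMonoid.induction_on_prime with
  | h₁ => exact absurd rfl hI
  | h₂ u hu =>
    have : u = 1 := isUnit_iff_eq_one.mp hu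
    subst this
    rw [map_one, Associates.mk_one, Associates.factors_one, Associates.count_zero hv]
    simp
  | h₃ I P hI0 hP ih =>
    have hPp : P.IsPrime := isPrime_of_prime hP
    have hPm : P.IsMaximal := hPp.isMaximal hP.ne_zero
    rw [map_mul, ← Associates.mk_mul_mk, Associates.count_mul _ _ hv, mul_add]
    · refine dvd_add ?_ (ih hI0)
      by_cases h : P.under (𝓞 K) = v.asIdeal
      · have h1 : P.LiesOver v.asIdeal := ⟨h.symm⟩
        have h2 : P.LiesOver (span {(ℓ : ℤ)}) := LiesOver.trans P v.asIdeal _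
        have : v.asIdeal.IsMaximal := v.isMaximal
        rw [relNorm_eq_pow_of_isMaximal P v.asIdeal, ← hF P hPp h2, Associates.mk_pow,
          Associates.count_pow _ hv, Associates.count_self hv, mul_one, inertiaDeg_tower (R := ℤ) v.asIdeal P]
        simpa using Associates.mk_ne_zero.mpr v.ne_bot
      · have hm : (P.under (𝓞 K)).IsMaximal := IsMaximal.under _ P
        have h0 : P.under (𝓞 K) ≠ ⊥ := under_ne_bot _ hP.ne_zero
        rw [relNorm_eq_pow_of_isMaximal P (P.under (𝓞 K)), Associates.mk_pow,
          Associates.count_pow _ hv, Associates.count_eq_zero_of_ne hv]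
        · simp
        · exact Associates.irreducible_mk.mpr (prime_of_isPrime h0 hm.isPrime).irreducible
        · intro h'
          exact h (associated_iff_eq.mp (Associates.mk_eq_mk_iff_associated.mp h')).symm
        · simpa using h0
    · simpa [relNorm_eq_bot_iff] using hP.ne_zero
    · simpa [relNorm_eq_bot_iff] using hI0

lemma valuation_norm {K L : Type*} [Field K] [Field L] [NumberField K] [NumberField L]
    [Algebra K L] (ℓ F : ℕ) [hℓ : Fact ℓ.Prime] (v : HeightOneSpectrum (𝓞 K))
    [v.asIdeal.LiesOver (span {(ℓ : ℤ)})]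
    (hF : ∀ P : Ideal (𝓞 L), P.IsPrime → P.LiesOver (span {(ℓ : ℤ)}) → inertiaDeg P ℤ = F)
    (y : L) (hy : y ≠ 0) :
    ∃ s : ℤ, v.valuation K (Algebra.norm K y) ^ (inertiaDeg v.asIdeal ℤ) = exp ((F : ℤ) * s) := by
  have key : ∀ a : 𝓞 L, a ≠ 0 → 
      ∃ s : ℤ, v.valuation K (Algebra.norm K (a : L)) ^ (inertiaDeg v.asIdeal ℤ) = exp ((F : ℤ) * s) := by
    intro a ha
    obtain ⟨c, hc⟩ := relNorm_count_dvd ℓ F v hF (span {a}) (by simpa using ha)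
    refine ⟨-c, ?_⟩
    have hn : Algebra.intNorm (𝓞 K) (𝓞 L) a ≠ 0 := by simpa using ha
    have := Algebra.algebraMap_intNorm (A := 𝓞 K) (K := K) (L := L) (B := 𝓞 L) a
    rw [← this, HeightOneSpectrum.valuation_of_algebraMap, HeightOneSpectrum.intValuation_if_neg _ hn,
      ← exp_nsmul, ← relNorm_singleton]
    congr 1
    have hc' := congrArg (Nat.cast : ℕ → ℤ) hc
    push_cast at hc'
    rw [nsmul_eq_mul]
    linarith
  obtain ⟨a, b, hb, rfl⟩ := IsFractionRing.div_surjective (A := 𝓞 L) y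
  have hb0 : b ≠ 0 := nonZeroDivisors.ne_zero hb
  have ha0 : a ≠ 0 := by rintro rfl; simp at hy
  obtain ⟨s, hs⟩ := key a ha0
  obtain ⟨t, ht⟩ := key b hb0
  refine ⟨s - t, ?_⟩
  have hN : Algebra.norm K ((a : L) / (b : L)) = Algebra.norm K (a : L) / Algebra.norm K (b : L) := by
    rw [eq_div_iff (by simpa [Algebra.norm_eq_zero_iff] using hb0), ← map_mul,
      div_mul_cancel₀ _ (by simpa using hb0)]
  rw [hN, map_div₀, div_pow, hs, ht, mul_sub, exp_sub]

lemma orderOf_cyc {L : Type*} [Field L] [NumberField L] (N : ℕ) [NeZero N]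
    [IsCyclotomicExtension {N} ℚ L]
    (ℓ p j : ℕ) [hℓ : Fact ℓ.Prime] (hp : p.Prime) (hpl : p ≠ ℓ) (hN : p ^ j ∣ N) :
    ∃ F : ℕ, j < ℓ ^ F ∧ ∀ P : Ideal (𝓞 L), P.IsPrime → P.LiesOver (span {(ℓ : ℤ)}) → 
      inertiaDeg P ℤ = F := by
  have aux : ∀ m : ℕ, m ≠ 0 → ¬ ℓ ∣ m → p ^ j ∣ m → j < ℓ ^ (orderOf (ℓ : ZMod m)) := by
    intro m hm h1 h2
    have h3 := pow_orderOf_eq_one (ℓ : ZMod m)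
    have h4 : 0 < orderOf (ℓ : ZMod m) := by
      have : NeZero m := ⟨hm⟩
      rw [orderOf_pos_iff]
      have h := isOfFinOrder_of_finite (ZMod.unitOfCoprime ℓ ((hℓ.out.coprime_iff_not_dvd).2 h1))
      rw [← Units.isOfFinOrder_val] at h
      simpa using h
    have h5 : m ∣ ℓ ^ (orderOf (ℓ : ZMod m)) - 1 := by
      rw [← Nat.modEq_iff_dvd' (Nat.one_le_pow _ _ hℓ.out.pos)]
      rw [← ZMod.natCast_eq_natCast_iff]
      push_cast
      exact h3.symm
    have h6 : 1 < ℓ ^ (orderOf (ℓ : ZMod m)) := Nat.one_lt_pow h4.ne' hℓ.out.one_lt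
    have h7 := Nat.le_of_dvd (by omega) (h2.trans h5)
    have := Nat.lt_pow_self hp.one_lt (n := j)
    omega
  by_cases h : ℓ ∣ N
  · obtain ⟨k, m, hm, hk⟩ := Nat.exists_eq_pow_mul_and_not_dvd (NeZero.ne N) ℓ hℓ.out.ne_one
    obtain ⟨k, rfl⟩ : ∃ k', k = k' + 1 := by
      cases k with
      | zero => simp at hk; subst hk; exact absurd h hm
      | succ k => exact ⟨k, rfl⟩
    refine ⟨_, aux m (by rintro rfl; simp at hm) hm ?_, fun P hP1 hP2 => 
      IsCyclotomicExtension.Rat.inertiaDeg_eq N L P hk hm⟩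
    rw [hk] at hN
    refine Nat.Coprime.dvd_of_dvd_mul_left ?_ hN
    exact Nat.Coprime.pow _ _ ((Nat.coprime_primes hp hℓ.out).2 hpl)
  · exact ⟨_, aux N (NeZero.ne N) h hN, fun P hP1 hP2 => 
      IsCyclotomicExtension.Rat.inertiaDeg_eq_of_not_dvd ℓ L P h⟩

lemma prime_pow_case {K : Type*} [Field K] [NumberField K] (p k : ℕ) [hp : Fact p.Prime]
    (hp2 : p ≠ 2) [IsCyclotomicExtension {p ^ (k + 1)} ℚ K] (x : K) (hx : x ≠ 0)
    (hN : Algebra.norm ℚ x = 1)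
    (h : ∀ v : HeightOneSpectrum (𝓞 K), ¬ v.asIdeal.LiesOver (span {(p : ℤ)}) →
      v.valuation K x = 1) (v : HeightOneSpectrum (𝓞 K)) : v.valuation K x = 1 := by
  by_cases hv : v.asIdeal.LiesOver (span {(p : ℤ)})
  swap
  · exact h v hv
  have hζ := IsCyclotomicExtension.zeta_spec (p ^ (k + 1)) ℚ K
  set ζ := IsCyclotomicExtension.zeta (p ^ (k + 1)) ℚ K with hζdef
  have hspan := IsCyclotomicExtension.Rat.eq_span_zeta_sub_one_of_liesOver p k K hζ v.asIdeal
  have hl0 : hζ.toInteger - 1 ≠ 0 := by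
    intro h0
    apply v.ne_bot
    rw [hspan, h0]
    simp
  have hcoe : ((hζ.toInteger - 1 : 𝓞 K) : K) = ζ - 1 := by
    exact (map_sub (algebraMap (𝓞 K) K) _ _).trans (by rw [map_one]; rfl)
  have hvl : v.valuation K (ζ - 1) = exp (-1 : ℤ) := by
    rw [← hcoe, HeightOneSpectrum.valuation_of_algebraMap, v.intValuation_singleton hl0 hspan]
  have hζ1 : ζ - 1 ≠ 0 := by
    intro h0
    rw [h0, map_zero] at hvl
    exact exp_ne_zero hvl.symm
  have hnorm : Algebra.norm ℚ (ζ - 1) = p := hζ.norm_sub_one_of_prime_ne_two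
    (Polynomial.cyclotomic.irreducible_rat (NeZero.pos _)) hp2
  have hvx0 : v.valuation K x ≠ 0 := by simpa using hx
  obtain ⟨c, hc⟩ : ∃ c : ℤ, v.valuation K x = exp c := ⟨log (v.valuation K x), (exp_log hvx0).symm⟩
  set y := x * (ζ - 1) ^ c with hy
  have hy0 : y ≠ 0 := mul_ne_zero hx (zpow_ne_zero _ hζ1)
  have hvy : ∀ w : HeightOneSpectrum (𝓞 K), w.valuation K y = 1 := by
    intro w
    by_cases hwv : w = v
    · subst hwv
      rw [hy, map_mul, map_zpow₀, hvl, hc, ← exp_zsmul, ← exp_add]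
      simp
    · have hmem : hζ.toInteger - 1 ∉ w.asIdeal := by
        intro hm
        apply hwv
        ext1
        have : v.asIdeal ≤ w.asIdeal := by
          rw [hspan, span_singleton_le_iff_mem]; exact hm
        exact (v.isMaximal.eq_of_le w.isPrime.ne_top this).symm
      have hw : w.valuation K (ζ - 1) = 1 := by
        rw [← hcoe]
        exact (HeightOneSpectrum.valuation_eq_one_iff_notMem (K := K) w).mpr hmem
      have hwx : w.valuation K x = 1 := by
        apply h
        intro hw
        apply hwv
        ext1
        rw [hspan]
        exact IsCyclotomicExtension.Rat.eq_span_zeta_sub_one_of_liesOver p k K hζ w.asIdeal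
      rw [hy, map_mul, map_zpow₀, hw, hwx]
      simp
  obtain ⟨a, ha⟩ := HeightOneSpectrum.mem_integers_of_valuation_le_one (R := 𝓞 K) K y (fun w => (hvy w).le)
  obtain ⟨b, hb⟩ := HeightOneSpectrum.mem_integers_of_valuation_le_one (R := 𝓞 K) K y⁻¹
    (fun w => by rw [map_inv₀, hvy w, inv_one])
  have hu : IsUnit a := by
    refine IsUnit.of_mul_eq_one b ?_
    apply RingOfIntegers.coe_injective
    rw [map_mul, ha, hb, mul_inv_cancel₀ hy0, map_one]
  rw [NumberField.isUnit_iff_norm] at hu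
  have hNy : Algebra.norm ℚ y = (p : ℚ) ^ c := by
    rw [hy, map_mul, hN, one_mul]
    let g : K →*₀ ℚ := ⟨⟨Algebra.norm ℚ, Algebra.norm_zero (R := ℚ) (S := K)⟩, 
      map_one (Algebra.norm ℚ), map_mul (Algebra.norm ℚ)⟩
    have h1 := map_zpow₀ g (ζ - 1) c
    change Algebra.norm ℚ _ = Algebra.norm ℚ _ ^ c at h1
    rw [h1, hnorm]
  have hu' : |Algebra.norm ℚ y| = 1 := by
    rw [← ha]
    simpa using hu
  rw [hNy, abs_zpow, Nat.abs_cast] at hu'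
  have hc0 : c = 0 := by
    have hp1 : (1 : ℚ) < p := by exact_mod_cast hp.out.one_lt
    exact (zpow_eq_one_iff_right₀ (by positivity) hp1.ne').mp hu'
  rw [hc, hc0, exp_zero]

end

instance instIsAlgQbar : Algebra.IsAlgebraic ℚ Qbar :=
  AlgebraicClosure.isAlgebraic ℚ

instance instIsIntQbar : Algebra.IsIntegral ℚ Qbar := Algebra.IsAlgebraic.isIntegral

instance instIsGaloisQbar : IsGalois ℚ Qbar where
  to_normal := ⟨fun _ => IsAlgClosed.splits _⟩

open IntermediateField in
lemma cycExt {η : Qbar} {n : ℕ} [NeZero n] (h : IsPrimitiveRoot η n) :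
    IsCyclotomicExtension {n} ℚ ℚ⟮η⟯ :=
  h.intermediateField_adjoin_isCyclotomicExtension ℚ

lemma totient_aux {p n : ℕ} (hp : p.Prime) (hpn : p ∣ n) (j : ℕ) :
    (p ^ j * n).totient = p ^ j * n.totient := by
  induction j with
  | zero => simp
  | succ j ih =>
    rw [pow_succ', mul_assoc, Nat.totient_mul_of_prime_of_dvd hp (hpn.mul_left _), ih, mul_assoc]

lemma mem_WS_of_pow {S : Finset ℕ} {φ : Qbar → Qbar} (hφ : IsEulerSystem S φ) {p : ℕ}
    (hp : p.Prime) (hpS : p ∉ S) (j : ℕ) {θ : Qbar} (h : θ ^ (p ^ j) ∈ WS S) : θ ∈ WS S := by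
  obtain ⟨n, hn, hc, h1⟩ := h
  refine ⟨p ^ j * n, by have := hp.pos; positivity, fun q hq => ?_, by rw [pow_mul, h1]⟩
  refine Nat.Coprime.mul_left (Nat.Coprime.pow_left _ ?_) (hc q hq)
  exact (Nat.coprime_primes hp (hφ.prime_mem q hq)).2 (by rintro rfl; exact hpS hq)

lemma WS_ne_zero {S : Finset ℕ} {η : Qbar} (h : η ∈ WS S) : η ≠ 0 := by
  rintro rfl
  obtain ⟨n, hn, -, h1⟩ := h
  simp [hn.ne'] at h1

lemma prod_roots {S : Finset ℕ} {φ : Qbar → Qbar} (hφ : IsEulerSystem S φ) {p : ℕ}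
    (hp : p.Prime) (hpS : p ∉ S) {η : Qbar} (hη : η ∈ WS S) :
    ∏ θ ∈ Polynomial.nthRootsFinset p η, φ θ = φ η := by
  obtain ⟨θ, hθ⟩ := IsAlgClosed.exists_pow_nat_eq η hp.pos
  have hθW : θ ∈ WS S := mem_WS_of_pow hφ hp hpS 1 (by rwa [pow_one, hθ])
  have h := hφ.norm_relation p hp hpS θ hθW
  rw [hθ, finprod_cond_eq_prod_of_cond_iff (fun ζ => φ (ζ * θ)) (p := fun ζ => ζ ^ p = 1)
    (t := Polynomial.nthRootsFinset p (1 : Qbar))] at h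
  · rw [← h]
    have h0 := WS_ne_zero hθW
    symm
    refine Finset.prod_nbij' (fun ζ => ζ * θ) (fun ζ => ζ / θ) ?_ ?_ ?_ ?_ ?_
    · intro ζ hζ
      rw [Polynomial.mem_nthRootsFinset hp.pos] at *
      rw [mul_pow, hζ, hθ, one_mul]
    · intro ζ hζ
      rw [Polynomial.mem_nthRootsFinset hp.pos] at *
      rw [div_pow, hζ, hθ, div_self (WS_ne_zero hη)]
    · intro ζ hζ
      simp [h0]
    · intro ζ hζ
      simp [h0]
    · intro ζ hζ
      rfl
  · intro x _
    rw [Polynomial.mem_nthRootsFinset hp.pos]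

lemma prod_roots_pow {S : Finset ℕ} {φ : Qbar → Qbar} (hφ : IsEulerSystem S φ) {p : ℕ}
    (hp : p.Prime) (hpS : p ∉ S) (j : ℕ) {η : Qbar} (hη : η ∈ WS S) :
    ∏ θ ∈ Polynomial.nthRootsFinset (p ^ j) η, φ θ = φ η := by
  classical
  induction j with
  | zero =>
    have : Polynomial.nthRootsFinset (p ^ 0) η = {η} := by
      ext x
      rw [Polynomial.mem_nthRootsFinset (by simp)]
      simp
    rw [this, Finset.prod_singleton]
  | succ j ih =>
    have hpp : ∀ i, 0 < p ^ i := fun i => pow_pos hp.pos i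
    rw [← ih, ← Finset.prod_fiberwise_of_maps_to (g := fun θ => θ ^ p)
      (t := Polynomial.nthRootsFinset (p ^ j) η)]
    · refine Finset.prod_congr rfl fun ψ hψ => ?_
      rw [Polynomial.mem_nthRootsFinset (hpp j)] at hψ
      have hψW : ψ ∈ WS S := mem_WS_of_pow hφ hp hpS j (by rwa [hψ])
      rw [← prod_roots hφ hp hpS hψW]
      refine Finset.prod_congr ?_ fun _ _ => rfl
      ext x
      rw [Finset.mem_filter, Polynomial.mem_nthRootsFinset (hpp _),
        Polynomial.mem_nthRootsFinset hp.pos]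
      constructor
      · exact fun h => h.2
      · intro h
        exact ⟨by rw [pow_succ', pow_mul, h, hψ], h⟩
    · intro θ hθ
      rw [Polynomial.mem_nthRootsFinset (hpp _)] at *
      rw [← pow_mul, ← pow_succ', hθ]

lemma exists_ext (L : IntermediateField ℚ Qbar) (σ : L →ₐ[ℚ] Qbar) :
    ∃ τ : Qbar ≃ₐ[ℚ] Qbar, ∀ x : L, τ x = σ x := by
  obtain ⟨τ, hτ⟩ := IsAlgClosed.surjective_domRestrict_of_isAlgebraic (K := ℚ) (L := L) (E := Qbar) (M := Qbar) σ
  refine ⟨(Algebra.IsAlgebraic.algEquivEquivAlgHom ℚ Qbar).symm τ, fun x => ?_⟩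
  rw [← hτ]
  rfl

open IntermediateField in
lemma mem_plus {S : Finset ℕ} {φ : Qbar → Qbar} (hφ : IsEulerSystem S φ) {η : Qbar}
    (hη : η ∈ WS S) : φ η ∈ adjoin ℚ ({η + η⁻¹} : Set Qbar) := by
  have h0 := WS_ne_zero hη
  rw [← InfiniteGalois.fixedField_fixingSubgroup (adjoin ℚ ({η + η⁻¹} : Set Qbar)), mem_fixedField_iff]
  intro σ hσ
  rw [IntermediateField.mem_fixingSubgroup_iff] at hσ
  have h1 := hσ (η + η⁻¹) (mem_adjoin_simple_self _ _)
  rw [map_add, map_inv₀] at h1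
  have hs0 : σ η ≠ 0 := by simpa using h0
  have h2 : (σ η - η) * (σ η - η⁻¹) = 0 := by
    field_simp at h1 ⊢
    linear_combination h1
  rw [← hφ.galois_equivariant σ η hη]
  rcases mul_eq_zero.mp h2 with h | h
  · rw [sub_eq_zero.mp h]
  · rw [sub_eq_zero.mp h, hφ.map_inv η hη]

open IntermediateField in
lemma mem_full {S : Finset ℕ} {φ : Qbar → Qbar} (hφ : IsEulerSystem S φ) {η : Qbar}
    (hη : η ∈ WS S) : φ η ∈ ℚ⟮η⟯ := by
  have h : adjoin ℚ ({η + η⁻¹} : Set Qbar) ≤ ℚ⟮η⟯ := by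
    rw [adjoin_simple_le_iff]
    exact add_mem (mem_adjoin_simple_self _ _) (inv_mem (mem_adjoin_simple_self _ _))
  exact h (mem_plus hφ hη)

open IntermediateField in
lemma norm_abs {S : Finset ℕ} {φ : Qbar → Qbar} (hφ : IsEulerSystem S φ) {p : ℕ}
    (hp : p.Prime) (hpS : p ∉ S) (k : ℕ) {η : Qbar} (hη : η ∈ WS S)
    (hord : IsPrimitiveRoot η (p ^ (k + 1))) :
    Algebra.norm ℚ (⟨φ η, mem_full hφ hη⟩ : ℚ⟮η⟯) = 1 := by
  classical
  have : NeZero (p ^ (k + 1)) := ⟨(pow_pos hp.pos _).ne'⟩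
  have := cycExt hord
  have : NumberField ℚ⟮η⟯ := IsCyclotomicExtension.numberField {p ^ (k + 1)} ℚ _
  have hpp : ∀ i, 0 < p ^ i := fun i => pow_pos hp.pos i
  apply (algebraMap ℚ Qbar).injective
  rw [Algebra.norm_eq_prod_embeddings ℚ Qbar, map_one]
  have hgen : IsPrimitiveRoot (AdjoinSimple.gen ℚ η) (p ^ (k + 1)) :=
    IsPrimitiveRoot.of_map_of_injective (f := algebraMap ℚ⟮η⟯ Qbar) hord (algebraMap ℚ⟮η⟯ Qbar).injective
  have h1 : ∏ σ : ℚ⟮η⟯ →ₐ[ℚ] Qbar, σ ⟨φ η, mem_full hφ hη⟩ =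
      ∏ θ ∈ primitiveRoots (p ^ (k + 1)) Qbar, φ θ := by
    rw [← Finset.prod_coe_sort (primitiveRoots (p ^ (k + 1)) Qbar)]
    refine Fintype.prod_equiv (hgen.embeddingsEquivPrimitiveRoots Qbar
      (Polynomial.cyclotomic.irreducible_rat (NeZero.pos _))) (fun σ => σ ⟨φ η, mem_full hφ hη⟩)
      (fun i => φ (i : Qbar)) fun σ => ?_
    rw [IsPrimitiveRoot.embeddingsEquivPrimitiveRoots_apply_coe]
    obtain ⟨τ, hτ⟩ := exists_ext _ σ
    rw [← hτ, ← hτ, AdjoinSimple.coe_gen, hφ.galois_equivariant τ η hη]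
  rw [h1]
  have hW1 : (1 : Qbar) ∈ WS S := ⟨1, one_pos, fun q _ => Nat.coprime_one_left q, one_pow _⟩
  have e1 := prod_roots_pow hφ hp hpS (k + 1) hW1
  have e2 := prod_roots_pow hφ hp hpS k hW1
  have hun : Polynomial.nthRootsFinset (p ^ (k + 1)) (1 : Qbar) = 
      primitiveRoots (p ^ (k + 1)) Qbar ∪ Polynomial.nthRootsFinset (p ^ k) (1 : Qbar) := by
    ext x
    rw [Finset.mem_union, Polynomial.mem_nthRootsFinset (hpp _), Polynomial.mem_nthRootsFinset (hpp _),
      mem_primitiveRoots (hpp _)]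
    constructor
    · intro h
      by_cases hx : x ^ p ^ k = 1
      · exact Or.inr hx
      · left
        have : Fact p.Prime := ⟨hp⟩
        have := orderOf_eq_prime_pow hx h
        rw [← this]
        exact IsPrimitiveRoot.orderOf x
    · rintro (h | h)
      · exact h.pow_eq_one
      · rw [pow_succ, pow_mul, h, one_pow]
  have hdis : Disjoint (primitiveRoots (p ^ (k + 1)) Qbar) (Polynomial.nthRootsFinset (p ^ k) (1 : Qbar)) := by
    rw [Finset.disjoint_left]
    intro x hx hx'
    rw [mem_primitiveRoots (hpp _)] at hx
    rw [Polynomial.mem_nthRootsFinset (hpp _)] at hx'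
    have := Nat.le_of_dvd (hpp _) (hx.dvd_of_pow_eq_one _ hx')
    exact absurd this (not_le.mpr (Nat.pow_lt_pow_right hp.one_lt (Nat.lt_succ_self k)))
  rw [hun, Finset.prod_union hdis, e2] at e1
  exact mul_right_cancel₀ (hφ.ne_zero 1 hW1) (by rw [e1, one_mul])

open IntermediateField in
lemma norm_rel {S : Finset ℕ} {φ : Qbar → Qbar} (hφ : IsEulerSystem S φ) {p : ℕ}
    (hp : p.Prime) (hpS : p ∉ S) (n j : ℕ) [NeZero n] (hpn : p ∣ n) {η θ : Qbar} (hη : η ∈ WS S)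
    (hθW : θ ∈ WS S)
    (hord : IsPrimitiveRoot η n) (hθ : θ ^ (p ^ j) = η) (hordθ : IsPrimitiveRoot θ (p ^ j * n))
    [Algebra ℚ⟮η⟯ ℚ⟮θ⟯] [IsScalarTower ℚ⟮η⟯ ℚ⟮θ⟯ Qbar] :
    Algebra.norm ℚ⟮η⟯ (⟨φ θ, mem_full hφ hθW⟩ : ℚ⟮θ⟯) = ⟨φ η, mem_full hφ hη⟩ := by
  classical
  have hpp : ∀ i, 0 < p ^ i := fun i => pow_pos hp.pos i
  have : NeZero (p ^ j * n) := ⟨(mul_pos (hpp j) (NeZero.pos n)).ne'⟩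
  have := cycExt hord
  have := cycExt hordθ
  have : NumberField ℚ⟮η⟯ := IsCyclotomicExtension.numberField {n} ℚ _
  have : NumberField ℚ⟮θ⟯ := IsCyclotomicExtension.numberField {p ^ j * n} ℚ _
  have hfr : Module.finrank ℚ⟮η⟯ ℚ⟮θ⟯ = p ^ j := by
    have h1 := Module.finrank_mul_finrank ℚ ℚ⟮η⟯ ℚ⟮θ⟯
    rw [IsCyclotomicExtension.finrank (n := n) _ (Polynomial.cyclotomic.irreducible_rat (NeZero.pos _)),
      IsCyclotomicExtension.finrank (n := p ^ j * n) _ (Polynomial.cyclotomic.irreducible_rat (NeZero.pos _))] at h1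
    have h2 : (p ^ j * n).totient = p ^ j * n.totient := totient_aux hp hpn j
    rw [h2, mul_comm] at h1
    exact Nat.eq_of_mul_eq_mul_right (Nat.totient_pos.mpr (NeZero.pos n)) h1
  apply (algebraMap ℚ⟮η⟯ Qbar).injective
  rw [Algebra.norm_eq_prod_embeddings ℚ⟮η⟯ Qbar]
  change _ = φ η
  rw [← prod_roots_pow hφ hp hpS j hη]
  have hmaps : ∀ σ : ℚ⟮θ⟯ →ₐ[ℚ⟮η⟯] Qbar, 
      σ (AdjoinSimple.gen ℚ θ) ∈ Polynomial.nthRootsFinset (p ^ j) η := by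
    intro σ
    rw [Polynomial.mem_nthRootsFinset (hpp _), ← map_pow]
    have : (AdjoinSimple.gen ℚ θ) ^ p ^ j = algebraMap ℚ⟮η⟯ ℚ⟮θ⟯ (AdjoinSimple.gen ℚ η) := by
      apply (algebraMap ℚ⟮θ⟯ Qbar).injective
      rw [← IsScalarTower.algebraMap_apply]
      change θ ^ p ^ j = η
      exact hθ
    rw [this, σ.commutes]
    rfl
  have hinj : Function.Injective (fun σ : ℚ⟮θ⟯ →ₐ[ℚ⟮η⟯] Qbar => σ (AdjoinSimple.gen ℚ θ)) := by
    intro σ τ h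
    have : σ.restrictScalars ℚ = τ.restrictScalars ℚ := by
      apply IntermediateField.algHom_ext_of_eq_adjoin ℚ (S := ℚ⟮θ⟯) (s := {θ}) rfl
      intro x hx
      obtain rfl : x = θ := hx
      exact h
    exact AlgHom.restrictScalars_injective ℚ this
  have himg : Finset.univ.image (fun σ : ℚ⟮θ⟯ →ₐ[ℚ⟮η⟯] Qbar => σ (AdjoinSimple.gen ℚ θ)) =
      Polynomial.nthRootsFinset (p ^ j) η := by
    apply Finset.eq_of_subset_of_card_le
    · intro x hx
      obtain ⟨σ, -, rfl⟩ := Finset.mem_image.mp hx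
      exact hmaps σ
    · rw [Finset.card_image_of_injective _ hinj, Finset.card_univ, AlgHom.card, hfr,
        Polynomial.nthRootsFinset_def]
      exact (Multiset.toFinset_card_le _).trans (Polynomial.card_nthRoots _ _)
  rw [← himg, Finset.prod_image (fun _ _ _ _ h => hinj h)]
  refine Finset.prod_congr rfl fun σ _ => ?_
  obtain ⟨τ, hτ⟩ := exists_ext _ (σ.restrictScalars ℚ)
  have e1 := hτ (⟨φ θ, mem_full hφ hθW⟩ : ℚ⟮θ⟯)
  have e2 := hτ (AdjoinSimple.gen ℚ θ)
  simp only [AlgHom.restrictScalars_apply] at e1 e2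
  rw [← e1, ← e2, AdjoinSimple.coe_gen, hφ.galois_equivariant τ θ hθW]

lemma exists_root {p n : ℕ} [NeZero n] (hp : p.Prime) (hpn : p ∣ n) (j : ℕ) {η : Qbar}
    (hord : IsPrimitiveRoot η n) :
    ∃ θ : Qbar, θ ^ (p ^ j) = η ∧ IsPrimitiveRoot θ (p ^ j * n) := by
  have hpos : 0 < p ^ j * n := mul_pos (pow_pos hp.pos _) (NeZero.pos n)
  have : NeZero (p ^ j * n) := ⟨hpos.ne'⟩
  obtain ⟨θ₀, h0⟩ := HasEnoughRootsOfUnity.exists_primitiveRoot Qbar (p ^ j * n)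
  have h1 : IsPrimitiveRoot (θ₀ ^ (p ^ j)) n := h0.pow hpos rfl
  obtain ⟨i, -, hi, hη⟩ := h1.isPrimitiveRoot_iff.mp hord
  refine ⟨θ₀ ^ i, by rw [← hη, ← pow_mul, ← pow_mul, mul_comm], h0.pow_of_coprime i ?_⟩
  refine Nat.Coprime.mul_right (Nat.Coprime.pow_right _ ?_) hi
  exact hi.coprime_dvd_right hpn

section
open NumberField Ideal IsDedekindDomain WithZero IntermediateField

lemma val_other {S : Finset ℕ} {φ : Qbar → Qbar} (hφ : IsEulerSystem S φ) {p : ℕ}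
    (hp : p.Prime) (hpS : p ∉ S) (n : ℕ) [NeZero n] (hpn : p ∣ n) {η : Qbar} (hη : η ∈ WS S)
    (hord : IsPrimitiveRoot η n) [NumberField ℚ⟮η⟯] (v : HeightOneSpectrum (𝓞 ℚ⟮η⟯)) (ℓ : ℕ)
    [Fact ℓ.Prime] (hpl : p ≠ ℓ) [v.asIdeal.LiesOver (span {(ℓ : ℤ)})] :
    v.valuation ℚ⟮η⟯ (⟨φ η, mem_full hφ hη⟩ : ℚ⟮η⟯) = 1 := by
  set x : ℚ⟮η⟯ := ⟨φ η, mem_full hφ hη⟩ with hx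
  have hx0 : x ≠ 0 := fun h => hφ.ne_zero η hη (congrArg Subtype.val h)
  have hvx0 : v.valuation ℚ⟮η⟯ x ≠ 0 := by simpa using hx0
  obtain ⟨c, hc⟩ : ∃ c : ℤ, v.valuation ℚ⟮η⟯ x = exp c :=
    ⟨log (v.valuation ℚ⟮η⟯ x), (exp_log hvx0).symm⟩
  set f := inertiaDeg v.asIdeal ℤ with hf
  have hfpos : 0 < f := inertiaDeg_pos _ _
  set M : ℕ := ((f : ℤ) * c).natAbs with hM
  set j : ℕ := ℓ ^ M with hj
  obtain ⟨θ, hθ, hordθ⟩ := exists_root hp hpn j hord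
  have hθW : θ ∈ WS S := mem_WS_of_pow hφ hp hpS j (by rwa [hθ])
  have hle : ℚ⟮η⟯ ≤ ℚ⟮θ⟯ := by
    rw [adjoin_simple_le_iff, ← hθ]
    exact pow_mem (mem_adjoin_simple_self _ _) _
  letI : Algebra ℚ⟮η⟯ ℚ⟮θ⟯ := (IntermediateField.inclusion hle).toRingHom.toAlgebra
  haveI : IsScalarTower ℚ⟮η⟯ ℚ⟮θ⟯ Qbar := IsScalarTower.of_algebraMap_eq fun _ => rfl
  have : NeZero (p ^ j * n) := ⟨(mul_pos (pow_pos hp.pos _) (NeZero.pos n)).ne'⟩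
  have := cycExt hordθ
  have : NumberField ℚ⟮θ⟯ := IsCyclotomicExtension.numberField {p ^ j * n} ℚ _
  have hrel := norm_rel hφ hp hpS n j hpn hη hθW hord hθ hordθ
  obtain ⟨F, hjF, hF⟩ := orderOf_cyc (L := ℚ⟮θ⟯) (p ^ j * n) ℓ p j hp hpl (dvd_mul_right _ _)
  obtain ⟨s, hs⟩ := valuation_norm (K := ℚ⟮η⟯) (L := ℚ⟮θ⟯) ℓ F v hF ⟨φ θ, mem_full hφ hθW⟩
    (fun h => hφ.ne_zero θ hθW (congrArg Subtype.val h))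
  rw [hrel, ← hx, hc, ← exp_nsmul, exp_inj, nsmul_eq_mul] at hs
  have hMF : M < F := (Nat.pow_lt_pow_iff_right (Fact.out : ℓ.Prime).one_lt).mp hjF
  have h0 : (f : ℤ) * c = 0 := by
    apply Int.eq_zero_of_dvd_of_natAbs_lt_natAbs (d := (F : ℤ)) ⟨s, hs⟩
    simpa using hMF
  have hc0 : c = 0 := by
    rcases mul_eq_zero.mp h0 with h | h
    · exact absurd h (by exact_mod_cast hfpos.ne')
    · exact h
  rw [hc, hc0, exp_zero]

lemma val_all {S : Finset ℕ} {φ : Qbar → Qbar} (hφ : IsEulerSystem S φ) (n : ℕ) [NeZero n]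
    (hn1 : n ≠ 1) (hnS : ∀ q ∈ S, Nat.Coprime n q) {η : Qbar} (hη : η ∈ WS S)
    (hord : IsPrimitiveRoot η n) [NumberField ℚ⟮η⟯] (v : HeightOneSpectrum (𝓞 ℚ⟮η⟯)) :
    v.valuation ℚ⟮η⟯ (⟨φ η, mem_full hφ hη⟩ : ℚ⟮η⟯) = 1 := by
  have key : ∀ p : ℕ, p.Prime → p ∣ n → p ∉ S := fun p hp hpn hpS =>
    hp.one_lt.ne' (Nat.dvd_one.mp ((hnS p hpS) ▸ Nat.dvd_gcd hpn dvd_rfl))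
  have hover : ∀ w : HeightOneSpectrum (𝓞 ℚ⟮η⟯), ∃ ℓ : ℕ, ℓ.Prime ∧
      w.asIdeal.LiesOver (span {(ℓ : ℤ)}) := by
    intro w
    have : NeZero w.asIdeal := ⟨w.ne_bot⟩
    exact ⟨_, Nat.absNorm_under_prime w.asIdeal, Int.liesOver_span_absNorm w.asIdeal⟩
  obtain ⟨p, hp, hpn⟩ := Nat.exists_prime_and_dvd hn1
  by_cases hall : ∀ q : ℕ, q.Prime → q ∣ n → q = p
  · have hnp : n = p ^ (n.primeFactorsList.length) :=
      Nat.eq_prime_pow_of_unique_prime_dvd (NeZero.pos n).ne' (fun {d} hd hdn => hall d hd hdn)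
    obtain ⟨k, hk⟩ : ∃ k, n.primeFactorsList.length = k + 1 := by
      refine Nat.exists_eq_succ_of_ne_zero fun h => hn1 ?_
      rw [hnp, h, pow_zero]
    rw [hk] at hnp
    have hpf : Fact p.Prime := ⟨hp⟩
    have hpS := key p hp hpn
    have hcyc := cycExt hord
    rw [hnp] at hcyc
    refine prime_pow_case p k (fun h => hpS (h ▸ hφ.two_mem)) _
      (fun h => hφ.ne_zero η hη (congrArg Subtype.val h))
      (norm_abs hφ hp hpS k hη (hnp ▸ hord)) (fun w hw => ?_) v
    obtain ⟨ℓ, hℓ, hl⟩ := hover w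
    have : Fact ℓ.Prime := ⟨hℓ⟩
    exact val_other hφ hp hpS n hpn hη hord w ℓ (fun h => hw (h ▸ hl))
  · push Not at hall
    obtain ⟨q, hq, hqn, hqp⟩ := hall
    obtain ⟨ℓ, hℓ, hl⟩ := hover v
    have : Fact ℓ.Prime := ⟨hℓ⟩
    by_cases h : p = ℓ
    · exact val_other hφ hq (key q hq hqn) n hqn hη hord v ℓ (fun h' => hqp (h'.trans h.symm))
    · exact val_other hφ hp (key p hp hpn) n hpn hη hord v ℓ h

lemma integral_both {S : Finset ℕ} {φ : Qbar → Qbar} (hφ : IsEulerSystem S φ) {η : Qbar}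
    (hη : η ∈ WS S) (hη1 : η ≠ 1) : IsIntegral ℤ (φ η) ∧ IsIntegral ℤ (φ η)⁻¹ := by
  obtain ⟨m, hm, hmS, hm1⟩ := id hη
  set n := orderOf η with hn
  have hnm : n ∣ m := orderOf_dvd_of_pow_eq_one hm1
  have : NeZero n := ⟨(Nat.pos_of_dvd_of_pos hnm hm).ne'⟩
  have hn1 : n ≠ 1 := fun h => hη1 (orderOf_eq_one_iff.mp h)
  have hord : IsPrimitiveRoot η n := IsPrimitiveRoot.orderOf η
  have := cycExt hord
  have : NumberField ℚ⟮η⟯ := IsCyclotomicExtension.numberField {n} ℚ _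
  have hv := val_all hφ n hn1 (fun q hq => (hmS q hq).coprime_dvd_left hnm) hη hord
  obtain ⟨a, ha⟩ := HeightOneSpectrum.mem_integers_of_valuation_le_one (R := 𝓞 ℚ⟮η⟯) ℚ⟮η⟯
    ⟨φ η, mem_full hφ hη⟩ (fun w => (hv w).le)
  obtain ⟨b, hb⟩ := HeightOneSpectrum.mem_integers_of_valuation_le_one (R := 𝓞 ℚ⟮η⟯) ℚ⟮η⟯
    (⟨φ η, mem_full hφ hη⟩ : ℚ⟮η⟯)⁻¹ (fun w => by rw [map_inv₀, hv w, inv_one])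
  constructor
  · have h := (RingOfIntegers.isIntegral_coe a).map (IsScalarTower.toAlgHom ℤ ℚ⟮η⟯ Qbar)
    rw [ha] at h
    exact h
  · have h := (RingOfIntegers.isIntegral_coe b).map (IsScalarTower.toAlgHom ℤ ℚ⟮η⟯ Qbar)
    rw [hb] at h
    exact h
end

open IntermediateField in
/-- Proposition 2.3. For an Euler system `φ` for `S` and any
`η ∈ W_S` with `η ≠ 1`, the value `φ(η)` is a unit of the ring of integers of the real
cyclotomic field `ℚ(η)⁺ = ℚ(η + η⁻¹)`; in particular it is an algebraic unit. -/
theorem euler_system_value_is_unit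
    (S : Finset ℕ) (φ : Qbar → Qbar) (hφ : IsEulerSystem S φ)
    (η : Qbar) (hηW : η ∈ WS S) (hη1 : η ≠ 1) :
    (∃ u : (integralClosure ℤ ↥(adjoin ℚ ({η + η⁻¹} : Set Qbar)))ˣ,
      (((u : integralClosure ℤ ↥(adjoin ℚ ({η + η⁻¹} : Set Qbar))) :
          ↥(adjoin ℚ ({η + η⁻¹} : Set Qbar))) : Qbar) = φ η) ∧
    IsIntegral ℤ (φ η) ∧ IsIntegral ℤ (φ η)⁻¹ := by
  obtain ⟨h1, h2⟩ := integral_both hφ hηW hη1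
  refine ⟨?_, h1, h2⟩
  have h0 := hφ.ne_zero η hηW
  have hm := mem_plus hφ hηW
  have hinj : Function.Injective (algebraMap ↥(adjoin ℚ ({η + η⁻¹} : Set Qbar)) Qbar) :=
    (algebraMap (adjoin ℚ ({η + η⁻¹} : Set Qbar)) Qbar).injective
  have i1 : IsIntegral ℤ (⟨φ η, hm⟩ : ↥(adjoin ℚ ({η + η⁻¹} : Set Qbar))) :=
    (isIntegral_algebraMap_iff (R := ℤ) hinj).mp h1
  have i2 : IsIntegral ℤ (⟨(φ η)⁻¹, inv_mem hm⟩ : ↥(adjoin ℚ ({η + η⁻¹} : Set Qbar))) :=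
    (isIntegral_algebraMap_iff (R := ℤ) hinj).mp h2
  refine ⟨⟨⟨_, i1⟩, ⟨_, i2⟩, ?_, ?_⟩, rfl⟩
  · apply Subtype.ext
    apply Subtype.ext
    exact mul_inv_cancel₀ h0
  · apply Subtype.ext
    apply Subtype.ext
    exact inv_mul_cancel₀ h0
end
end

section
/- Fix an odd prime p, an integer n ≥ 0, and a primitive p^{n+1}-th root of unity ζ_n. For every integer a coprime to 2p there exists a finite set S of primes with p ∉ S and an Euler system φ for S such that φ(ζ_n) = (ζ_n^{−a} − ζ_n^{a})/(ζ_n^{−1} − ζ_n). Consequently, every such cyclotomic unit of ℚ(ζ_n)⁺ is the value at ζ_n of an Euler system. -/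
open scoped BigOperators

noncomputable section

/-- The explicit Euler system. -/
def phiE (s : ℤ) (m : ℕ) (η : Qbar) : Qbar :=
  (s : Qbar) * ((∑ j ∈ Finset.range m, (η ^ 2) ^ j) * (η⁻¹) ^ (m - 1))

lemma phiE_mul (s : ℤ) (m : ℕ) (hm : 0 < m) (η : Qbar) (h0 : η ≠ 0) :
    phiE s m η * (η - η⁻¹) = s * (η ^ m - (η ^ m)⁻¹) := by
  obtain ⟨k, rfl⟩ : ∃ k, m = k + 1 := ⟨m - 1, by omega⟩
  have h := geom_sum_mul (η ^ 2) (k + 1)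
  have h2 : η - η⁻¹ = (η ^ 2 - 1) * η⁻¹ := by field_simp
  unfold phiE
  rw [h2]
  calc _ = (s : Qbar) * (((∑ j ∈ Finset.range (k+1), (η ^ 2) ^ j) * (η ^ 2 - 1)) *
        ((η⁻¹) ^ k * η⁻¹)) := by simp only [Nat.add_sub_cancel]; ring
    _ = _ := by
      rw [h, ← pow_succ, inv_pow]
      have : η ^ (k+1) ≠ 0 := pow_ne_zero _ h0
      field_simp
      ring

lemma phiE_one (s : ℤ) (m : ℕ) : phiE s m 1 = s * m := by
  simp [phiE]

lemma eq_one_of_pow {x : Qbar} {a b : ℕ} (h : Nat.Coprime a b) (ha : x ^ a = 1) (hb : x ^ b = 1) :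
    x = 1 := by
  have := pow_gcd_eq_one.mpr ⟨ha, hb⟩
  rwa [h, pow_one] at this

lemma sub_inv_ne {x : Qbar} (h0 : x ≠ 0) {a : ℕ} (h : Nat.Coprime a 2) (ha : x ^ a = 1)
    (h1 : x ≠ 1) : x - x⁻¹ ≠ 0 := by
  intro hh
  apply h1
  apply eq_one_of_pow h ha
  have : x = x⁻¹ := sub_eq_zero.mp hh
  rw [pow_two]; nth_rewrite 2 [this]
  exact mul_inv_cancel₀ h0

lemma mem_mu {p : ℕ} (hp : 0 < p) {z : Qbar} :
    z ∈ Polynomial.nthRootsFinset p (1 : Qbar) ↔ z ^ p = 1 :=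
  Polynomial.mem_nthRootsFinset hp 1

lemma mu_reindex {p : ℕ} (hp : 0 < p) {k : ℕ} (hk : Nat.Coprime k p) (F : Qbar → Qbar) :
    ∏ z ∈ Polynomial.nthRootsFinset p (1 : Qbar), F (z ^ k)
      = ∏ z ∈ Polynomial.nthRootsFinset p (1 : Qbar), F z := by
  classical
  have hinj : Set.InjOn (fun z : Qbar => z ^ k) (Polynomial.nthRootsFinset p (1 : Qbar)) := by
    intro x hx y hy hxy
    simp only [Finset.mem_coe, mem_mu hp] at hx hy
    have hy0 : y ≠ 0 := by rintro rfl; simp [hp.ne'] at hy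
    have : x / y = 1 := by
      apply eq_one_of_pow hk
      · rw [div_pow]; simp only at hxy; rw [hxy, div_self (pow_ne_zero _ hy0)]
      · rw [div_pow, hx, hy, div_one]
    exact (div_eq_one_iff_eq hy0).mp this
  have himg : (Polynomial.nthRootsFinset p (1 : Qbar)).image (fun z : Qbar => z ^ k)
      = Polynomial.nthRootsFinset p (1 : Qbar) := by
    apply Finset.eq_of_subset_of_card_le
    · intro z hz
      obtain ⟨w, hw, rfl⟩ := Finset.mem_image.mp hz
      rw [mem_mu hp] at hw ⊢
      rw [← pow_mul, mul_comm, pow_mul, hw, one_pow]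
    · rw [Finset.card_image_of_injOn hinj]
  conv_rhs => rw [← himg]
  rw [Finset.prod_image hinj]

lemma mu_prod {p : ℕ} (hp : 0 < p) (hodd : Nat.Coprime 2 p) :
    ∏ z ∈ Polynomial.nthRootsFinset p (1 : Qbar), z = 1 := by
  have h := mu_reindex hp hodd (fun z => z)
  rw [Finset.prod_pow] at h
  have h0 : ∏ z ∈ Polynomial.nthRootsFinset p (1 : Qbar), z ≠ 0 := by
    rw [Finset.prod_ne_zero_iff]
    rintro z hz rfl
    rw [mem_mu hp] at hz
    simp [hp.ne'] at hz
  rw [pow_two] at h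
  exact mul_left_cancel₀ h0 (by rw [h, mul_one])

lemma mu_card {p : ℕ} (hp : p.Prime) :
    (Polynomial.nthRootsFinset p (1 : Qbar)).card = p := by
  have : NeZero ((p : ℕ) : Qbar) := ⟨by exact_mod_cast hp.ne_zero⟩
  have : NeZero p := ⟨hp.ne_zero⟩
  obtain ⟨w, hw⟩ := HasEnoughRootsOfUnity.exists_primitiveRoot Qbar p
  exact hw.card_nthRootsFinset

lemma mu_prod_f {p : ℕ} (hp : p.Prime) (hodd : Nat.Coprime 2 p) (x : Qbar) (hx : x ≠ 0) :
    ∏ z ∈ Polynomial.nthRootsFinset p (1 : Qbar), (z * x - (z * x)⁻¹) = x ^ p - (x ^ p)⁻¹ := by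
  have : NeZero ((p : ℕ) : Qbar) := ⟨by exact_mod_cast hp.ne_zero⟩
  have : NeZero p := ⟨hp.ne_zero⟩
  obtain ⟨w, hw⟩ := HasEnoughRootsOfUnity.exists_primitiveRoot Qbar p
  have h1 : ∀ z ∈ Polynomial.nthRootsFinset p (1 : Qbar),
      (z * x - (z * x)⁻¹) = z⁻¹ * ((-1) * (x⁻¹ - z ^ 2 * x)) := by
    intro z hz
    rw [mem_mu hp.pos] at hz
    have : z ≠ 0 := by rintro rfl; simp [hp.ne_zero] at hz
    field_simp
    ring
  rw [Finset.prod_congr rfl h1, Finset.prod_mul_distrib, Finset.prod_mul_distrib,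
    Finset.prod_inv_distrib, mu_prod hp.pos hodd,
    mu_reindex hp.pos hodd (fun z => x⁻¹ - z * x),
    ← hw.pow_sub_pow_eq_prod_sub_mul _ _ hp.pos, Finset.prod_const, mu_card hp,
    Odd.neg_one_pow ((Nat.coprime_two_left).mp hodd)]
  simp

lemma phiE_norm (s : ℤ) (hs : s = 1 ∨ s = -1) (m : ℕ) (hm : 0 < m) {p : ℕ} (hp : p.Prime)
    (hodd : Nat.Coprime 2 p) (hmp : Nat.Coprime m p) (η : Qbar) {n : ℕ} (hn0 : 0 < n)
    (hn : Nat.Coprime n 2) (hη : η ^ n = 1) :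
    ∏ z ∈ Polynomial.nthRootsFinset p (1 : Qbar), phiE s m (z * η) = phiE s m (η ^ p) := by
  classical
  have hη0 : η ≠ 0 := by rintro rfl; simp [hn0.ne'] at hη
  have hz0 : ∀ z ∈ Polynomial.nthRootsFinset p (1 : Qbar), z ≠ 0 := by
    rintro z hz rfl
    rw [mem_mu hp.pos] at hz
    simp [hp.ne_zero] at hz
  have hpo : Odd p := (Nat.coprime_two_left).mp hodd
  by_cases h : η ^ p = 1
  · have e1 : ∏ z ∈ Polynomial.nthRootsFinset p (1 : Qbar), phiE s m (z * η)
        = ∏ z ∈ Polynomial.nthRootsFinset p (1 : Qbar), phiE s m z := by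
      apply Finset.prod_bij' (fun z _ => z * η) (fun z _ => z * η⁻¹)
      · intro z hz; rw [mem_mu hp.pos] at hz ⊢; rw [mul_pow, hz, h, one_mul]
      · intro z hz; rw [mem_mu hp.pos] at hz ⊢; rw [mul_pow, hz, inv_pow, h, one_mul, inv_one]
      · intro z hz; field_simp
      · intro z hz; field_simp
      · intro z hz; rfl
    have m1 : (1 : Qbar) ∈ Polynomial.nthRootsFinset p (1 : Qbar) := by
      rw [mem_mu hp.pos, one_pow]
    rw [e1, h, ← Finset.mul_prod_erase _ _ m1]
    have key : (∏ z ∈ (Polynomial.nthRootsFinset p (1 : Qbar)).erase 1, phiE s m z) *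
        ∏ z ∈ (Polynomial.nthRootsFinset p (1 : Qbar)).erase 1, (z - z⁻¹)
        = ∏ z ∈ (Polynomial.nthRootsFinset p (1 : Qbar)).erase 1, (z - z⁻¹) := by
      rw [← Finset.prod_mul_distrib]
      rw [Finset.prod_congr rfl (fun z hz => phiE_mul s m hm z (hz0 z (Finset.mem_of_mem_erase hz)))]
      rw [Finset.prod_mul_distrib, Finset.prod_const, Finset.card_erase_of_mem m1, mu_card hp]
      have hs1 : (s : Qbar) ^ (p - 1) = 1 := by
        have : Even (p - 1) := by
          obtain ⟨k, hk⟩ := hpo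
          exact ⟨k, by omega⟩
        rcases hs with rfl | rfl
        · simp
        · simp [this.neg_one_pow]
      rw [hs1, one_mul]
      have hr := mu_reindex hp.pos hmp (fun z => if z = 1 then 1 else z - z⁻¹)
      rw [← Finset.mul_prod_erase _ _ m1, ← Finset.mul_prod_erase _ (fun z => if z = 1 then (1:Qbar) else z - z⁻¹) m1] at hr
      simp only [one_pow, if_true, one_mul] at hr
      rw [Finset.prod_congr rfl, hr, Finset.prod_congr rfl]
      · intro z hz
        rw [if_neg (Finset.ne_of_mem_erase hz)]
      · intro z hz
        rw [if_neg]
        intro hh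
        exact Finset.ne_of_mem_erase hz
          (eq_one_of_pow hmp hh ((mem_mu hp.pos).mp (Finset.mem_of_mem_erase hz)))
    have hne : ∏ z ∈ (Polynomial.nthRootsFinset p (1 : Qbar)).erase 1, (z - z⁻¹) ≠ 0 := by
      rw [Finset.prod_ne_zero_iff]
      intro z hz
      exact sub_inv_ne (hz0 z (Finset.mem_of_mem_erase hz)) hodd.symm
        ((mem_mu hp.pos).mp (Finset.mem_of_mem_erase hz)) (Finset.ne_of_mem_erase hz)
    rw [mul_right_cancel₀ hne (key.trans (one_mul _).symm), mul_one]
  · have hne : η ^ p - (η ^ p)⁻¹ ≠ 0 := by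
      apply sub_inv_ne (pow_ne_zero _ hη0) hn _ h
      rw [← pow_mul, mul_comm, pow_mul, hη, one_pow]
    apply mul_right_cancel₀ hne
    rw [phiE_mul s m hm _ (pow_ne_zero _ hη0)]
    conv_lhs => rw [← mu_prod_f hp hodd η hη0]
    rw [← Finset.prod_mul_distrib]
    rw [Finset.prod_congr rfl (fun z hz => phiE_mul s m hm (z * η) (mul_ne_zero (hz0 z hz) hη0))]
    rw [Finset.prod_mul_distrib, Finset.prod_const, mu_card hp]
    have hs1 : (s : Qbar) ^ p = s := by
      rcases hs with rfl | rfl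
      · simp
      · simp [hpo.neg_one_pow]
    rw [hs1]
    congr 1
    simp only [mul_pow]
    rw [mu_reindex hp.pos hmp (fun z => z * η ^ m - (z * η ^ m)⁻¹),
      mu_prod_f hp hodd _ (pow_ne_zero _ hη0), ← pow_mul, ← pow_mul, mul_comm]

lemma isInt_root {x : Qbar} {n : ℕ} (hn : 0 < n) (h : x ^ n = 1) : IsIntegral ℤ x :=
  IsIntegral.of_pow hn (h ▸ isIntegral_one)

lemma phiE_cong (s : ℤ) (m : ℕ) {p : ℕ} (hp : p.Prime) (η : Qbar) {n : ℕ} (hn0 : 0 < n)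
    (hη : η ^ n = 1) (z : Qbar) (hz : z ^ p = 1) (P : Ideal (integralClosure ℤ Qbar))
    (hP : P.IsMaximal) (hpP : (p : integralClosure ℤ Qbar) ∈ P) :
    congMod P (phiE s m (z * η)) (phiE s m η) := by
  let E : integralClosure ℤ Qbar := ⟨η, isInt_root hn0 hη⟩
  let E' : integralClosure ℤ Qbar := ⟨η⁻¹, isInt_root hn0 (by rw [inv_pow, hη, inv_one])⟩
  let Z : integralClosure ℤ Qbar := ⟨z, isInt_root hp.pos hz⟩
  let Z' : integralClosure ℤ Qbar := ⟨z⁻¹, isInt_root hp.pos (by rw [inv_pow, hz, inv_one])⟩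
  have hz0 : z ≠ 0 := by rintro rfl; simp [hp.ne_zero] at hz
  have hZp : Z ^ p = 1 := Subtype.ext hz
  have hZZ : Z * Z' = 1 := Subtype.ext (mul_inv_cancel₀ hz0)
  have := hP.isPrime
  let q := Ideal.Quotient.mk P
  have hq : q Z = 1 := by
    have : CharP (integralClosure ℤ Qbar ⧸ P) p := by
      apply (CharP.charP_iff_prime_eq_zero hp).mpr
      have := Ideal.Quotient.eq_zero_iff_mem.mpr hpP
      simpa using this
    have : Fact p.Prime := ⟨hp⟩
    have : (q Z - 1) ^ p = 0 := by
      rw [sub_pow_char, ← map_pow, hZp, map_one, one_pow, sub_self]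
    exact sub_eq_zero.mp (eq_zero_of_pow_eq_zero this)
  have hq' : q Z' = 1 := by
    have := congrArg q hZZ
    rwa [map_mul, hq, one_mul, map_one] at this
  let A : integralClosure ℤ Qbar :=
    (s : integralClosure ℤ Qbar) * ((∑ j ∈ Finset.range m, ((Z * E) ^ 2) ^ j) * (Z' * E') ^ (m - 1))
  let B : integralClosure ℤ Qbar :=
    (s : integralClosure ℤ Qbar) * ((∑ j ∈ Finset.range m, (E ^ 2) ^ j) * E' ^ (m - 1))
  refine ⟨1, fun h => hP.ne_top ((Ideal.eq_top_iff_one P).mpr h), A - B, ?_, ?_⟩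
  · rw [← Ideal.Quotient.eq]
    change q A = q B
    simp only [A, B, map_mul, map_sum, map_pow, hq, hq', one_mul]
  · simp only [phiE, A, B, E, E', Z, Z']
    push_cast
    rw [mul_inv]
    simp

theorem cyclotomic_unit_is_euler_system_value
    (p : ℕ) (hp : p.Prime) (hodd : p ≠ 2) (n : ℕ)
    (ζ : Qbar) (hζ : IsPrimitiveRoot ζ (p ^ (n + 1)))
    (a : ℤ) (ha : IsCoprime a (2 * (p : ℤ))) :
    ∃ (S : Finset ℕ) (φ : Qbar → Qbar), p ∉ S ∧ IsEulerSystem S φ ∧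
      φ ζ = (ζ ^ (-a) - ζ ^ a) / (ζ ^ (-1 : ℤ) - ζ ^ (1 : ℤ)) := by
  have hap : IsCoprime a (p : ℤ) := ha.of_mul_right_right
  have ha2 : IsCoprime a 2 := ha.of_mul_right_left
  set m := a.natAbs with hm
  have hmp : Nat.Coprime m p := by
    exact Int.isCoprime_iff_gcd_eq_one.mp hap
  have ha0 : a ≠ 0 := by
    rintro rfl
    rw [isCoprime_zero_left] at ha2
    revert ha2; decide
  have hm0 : 0 < m := Int.natAbs_pos.mpr ha0
  have hs : a.sign = 1 ∨ a.sign = -1 := by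
    rcases lt_or_gt_of_ne ha0 with h | h
    · right; exact Int.sign_eq_neg_one_of_neg h
    · left; exact Int.sign_eq_one_of_pos h
  have hsne : ((a.sign : ℤ) : Qbar) ≠ 0 := by
    rcases hs with h | h <;> rw [h] <;> simp
  have W : ∀ η ∈ WS (insert 2 m.primeFactors), ∃ k : ℕ, 0 < k ∧ Nat.Coprime k 2 ∧
      Nat.Coprime k m ∧ η ^ k = 1 := by
    rintro η ⟨k, hk, hq, h⟩
    refine ⟨k, hk, hq 2 (by simp), ?_, h⟩
    apply Nat.coprime_of_dvd
    intro q hqp hqk hqm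
    have := hq q (by simp [hqp, hqm, hm0.ne'] )
    have := Nat.dvd_gcd hqk (dvd_refl q)
    rw [hq q (by simp [hqp, hqm, hm0.ne'])] at this
    exact hqp.one_lt.ne' (Nat.dvd_one.mp this)
  have hp2 : Nat.Coprime p 2 := (Nat.coprime_primes hp Nat.prime_two).mpr hodd
  refine ⟨insert 2 m.primeFactors, phiE a.sign m, ?_, ?_, ?_⟩
  · simp only [Finset.mem_insert, not_or]
    refine ⟨hodd, fun h => ?_⟩
    have h1 := Nat.dvd_gcd (Nat.dvd_of_mem_primeFactors h) (dvd_refl p)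
    rw [hmp] at h1
    exact hp.one_lt.ne' (Nat.dvd_one.mp h1)
  · refine ⟨by simp, ?_, ?_, ?_, ?_, ?_, ?_⟩
    · intro q hq
      rcases Finset.mem_insert.mp hq with rfl | h
      · exact Nat.prime_two
      · exact Nat.prime_of_mem_primeFactors h
    · intro η hη
      obtain ⟨k, hk, hk2, hkm, h⟩ := W η hη
      have hη0 : η ≠ 0 := by rintro rfl; simp [hk.ne'] at h
      by_cases h1 : η = 1
      · rw [h1, phiE_one]
        exact mul_ne_zero hsne (by exact_mod_cast hm0.ne')
      · intro hz
        have := phiE_mul a.sign m hm0 η hη0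
        rw [hz, zero_mul] at this
        refine mul_ne_zero hsne (sub_inv_ne (pow_ne_zero m hη0) hk2 ?_ ?_) this.symm
        · rw [← pow_mul, mul_comm, pow_mul, h, one_pow]
        · exact fun hh => h1 (eq_one_of_pow hkm h hh)
    · intro σ η _
      simp [phiE]
    · intro η hη
      obtain ⟨k, hk, hk2, hkm, h⟩ := W η hη
      have hη0 : η ≠ 0 := by rintro rfl; simp [hk.ne'] at h
      by_cases h1 : η = 1
      · rw [h1, inv_one]
      · apply mul_right_cancel₀ (sub_inv_ne hη0 hk2 h h1)
        rw [phiE_mul _ m hm0 _ hη0]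
        have := phiE_mul a.sign m hm0 η⁻¹ (inv_ne_zero hη0)
        rw [inv_inv, inv_pow, inv_inv] at this
        linear_combination -this
    · intro q hq hqS η hη
      obtain ⟨k, hk, hk2, hkm, h⟩ := W η hη
      simp only [Finset.mem_insert, not_or] at hqS
      rw [← phiE_norm a.sign hs m hm0 hq ((Nat.coprime_primes Nat.prime_two hq).mpr (Ne.symm hqS.1))
        _ η hk hk2 h]
      · exact finprod_cond_eq_prod_of_cond_iff _ (fun _ => (mem_mu hq.pos).symm)
      · rw [Nat.coprime_comm, hq.coprime_iff_not_dvd]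
        intro hd
        exact hqS.2 (Nat.mem_primeFactors.mpr ⟨hq, hd, hm0.ne'⟩)
    · intro q hq _ η hη _ z hz P hP hqP
      obtain ⟨k, hk, _, _, h⟩ := W η hη
      exact phiE_cong _ _ hq η hk h z hz P hP hqP
  · have hpp := pow_pos hp.pos (n + 1)
    have hζ0 : ζ ≠ 0 := hζ.ne_zero hpp.ne'
    have h1 : ζ ≠ 1 := by
      rintro rfl
      have := hζ.unique IsPrimitiveRoot.one
      exact (Nat.one_lt_pow (Nat.succ_ne_zero n) hp.one_lt).ne' this
    have hne := sub_inv_ne hζ0 (hp2.pow_left (n+1)) hζ.pow_eq_one h1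
    have hmul := phiE_mul a.sign m hm0 ζ hζ0
    have hne' : ζ ^ (-1 : ℤ) - ζ ^ (1 : ℤ) ≠ 0 := by
      rw [zpow_neg_one, zpow_one]
      intro h; apply hne; linear_combination -h
    rw [eq_div_iff hne', zpow_neg_one, zpow_one]
    rcases lt_or_gt_of_ne ha0 with h | h
    · have e : a = -(m : ℤ) := by omega
      rw [Int.sign_eq_neg_one_of_neg h] at hmul ⊢
      rw [e, neg_neg, zpow_neg, zpow_natCast]
      push_cast at hmul
      linear_combination -hmul
    · have e : a = (m : ℤ) := by omega
      rw [Int.sign_eq_one_of_pos h] at hmul ⊢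
      rw [e, zpow_neg, zpow_natCast]
      push_cast at hmul
      linear_combination -hmul
end
end

section
/- (Lemma 8.2) Let p be a prime, G a finite abelian group, and B a finitely generated ℤ_p[G]-module that is p-torsion free. Let f ∈ ℤ_p[G] be a non-zero-divisor and b ∈ B. If ψ(b) ∈ f·ℤ_p[G] for every ℤ_p[G]-module homomorphism ψ : B → ℤ_p[G], then b ∈ f·B. -/
noncomputable section

/-- Lemma 8.2, Rubin. Let `p` be a prime, `G` a finite abelian
group, and `B` a finitely generated `ℤ_p[G]`-module which is `p`-torsion free.  Let
`f ∈ ℤ_p[G]` be a non-zero-divisor and `b ∈ B`.  If `ψ(b) ∈ f·ℤ_p[G]` for every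
`ℤ_p[G]`-homomorphism `ψ : B → ℤ_p[G]`, then `b ∈ f·B`. -/
theorem mem_smul_of_all_homs_mem
    (p : ℕ) [Fact p.Prime]
    (G : Type) [CommGroup G] [Fintype G]
    (B : Type) [AddCommGroup B] [Module (MonoidAlgebra ℤ_[p] G) B]
    (hfg : Module.Finite (MonoidAlgebra ℤ_[p] G) B)
    (htf : Function.Injective (fun b : B => (p : ℕ) • b))
    (f : MonoidAlgebra ℤ_[p] G) (hf : f ∈ nonZeroDivisors (MonoidAlgebra ℤ_[p] G))
    (b : B)
    (hb : ∀ ψ : B →ₗ[MonoidAlgebra ℤ_[p] G] MonoidAlgebra ℤ_[p] G,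
      ψ b ∈ Ideal.span ({f} : Set (MonoidAlgebra ℤ_[p] G))) :
    ∃ c : B, b = f • c := by
  classical
  let _ : Module ℤ_[p] B := Module.compHom B (algebraMap ℤ_[p] (MonoidAlgebra ℤ_[p] G))
  have : IsScalarTower ℤ_[p] (MonoidAlgebra ℤ_[p] G) B :=
    IsScalarTower.of_algebraMap_smul fun r x => rfl
  have : Module.Finite ℤ_[p] (MonoidAlgebra ℤ_[p] G) := inferInstance
  have : Module.Finite ℤ_[p] B := Module.Finite.trans (MonoidAlgebra ℤ_[p] G) B
  have hpn : ∀ (n : ℕ) (x : B), ((p : ℤ_[p]) ^ n) • x = 0 → x = 0 := by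
    intro n
    induction n with
    | zero => intro x hx; simpa using hx
    | succ n ih =>
      intro x hx
      rw [pow_succ, mul_smul] at hx
      have h1 := ih _ hx
      rw [Nat.cast_smul_eq_nsmul] at h1
      apply htf
      simpa using h1
  have htors : ∀ (r : ℤ_[p]) (x : B), r ≠ 0 → r • x = 0 → x = 0 := by
    intro r x hr hx
    rw [PadicInt.unitCoeff_spec hr, mul_smul] at hx
    exact hpn _ _ (((PadicInt.unitCoeff hr).isUnit.smul_eq_zero).mp hx)
  have : Module.IsTorsionFree ℤ_[p] B := by
    refine ⟨fun r hr x y hxy => ?_⟩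
    have : r • (x - y) = 0 := by rw [smul_sub]; exact sub_eq_zero.mpr hxy
    exact sub_eq_zero.mp (htors r _ hr.ne_zero this)
  have : Module.Free ℤ_[p] B := inferInstance
  obtain ⟨d, hd, h, hfh⟩ := IsAlgebraic.exists_nonzero_dvd (R := ℤ_[p])
    (Algebra.IsIntegral.isIntegral (R := ℤ_[p]) f).isAlgebraic hf
  have key : ∀ φ : B →ₗ[ℤ_[p]] ℤ_[p], d ∣ φ (h • b) := by
    intro φ
    let ψ₀ : B →ₗ[ℤ_[p]] MonoidAlgebra ℤ_[p] G :=
      ∑ g : G, (MonoidAlgebra.lsingle g) ∘ₗ φ ∘ₗ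
        (Module.toModuleEnd ℤ_[p] (S := MonoidAlgebra ℤ_[p] G) B (MonoidAlgebra.single g⁻¹ 1))
    have hψ₀ : ∀ x, ψ₀ x = ∑ g : G, MonoidAlgebra.single g
        (φ ((MonoidAlgebra.single g⁻¹ (1 : ℤ_[p])) • x)) := by
      intro x
      simp [ψ₀]
    let ψ : B →ₗ[MonoidAlgebra ℤ_[p] G] MonoidAlgebra ℤ_[p] G :=
      MonoidAlgebra.equivariantOfLinearOfComm ψ₀ (by
        intro k x
        rw [hψ₀, hψ₀, Finset.smul_sum]
        refine Fintype.sum_equiv (Equiv.mulLeft k⁻¹) _ _ fun g => ?_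
        simp [smul_smul, MonoidAlgebra.single_mul_single])
    have hψ : ∀ x, ψ x = ψ₀ x := fun x => rfl
    obtain ⟨a, ha⟩ := Ideal.mem_span_singleton.mp (hb ψ)
    have h2 : ψ (h • b) = d • a := by
      rw [map_smul, ha, smul_eq_mul, ← mul_assoc, mul_comm h f, ← hfh, Algebra.smul_def]
    rw [hψ, hψ₀] at h2
    have h3 := congrArg (fun z : MonoidAlgebra ℤ_[p] G => z.coeff 1) h2
    refine ⟨a.coeff 1, ?_⟩
    simpa [MonoidAlgebra.coeff_single_apply, Finsupp.single_apply, ← MonoidAlgebra.one_def] using h3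
  let β := Module.Free.chooseBasis ℤ_[p] B
  choose c hc using fun i => key (β.coord i)
  have hcc : h • b = d • (∑ i, c i • β i) := by
    apply β.ext_elem
    intro i
    have := hc i
    simp only [Module.Basis.coord_apply] at this
    rw [this]
    simp [Finsupp.single_apply]
  refine ⟨∑ i, c i • β i, ?_⟩
  have h5 : d • (b - f • (∑ i, c i • β i)) = 0 := by
    have e : d • b = f • (h • b) := by
      rw [smul_smul, ← hfh, algebraMap_smul]
    rw [smul_sub, e, hcc, smul_comm f d, sub_self]
  exact sub_eq_zero.mp (htors d _ hd h5)
end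
end
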